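/- arXiv:1610.06731 — 8 statements merged into one kernel-verified Lean document; each statement's English description precedes it below -/
import Mathlib

section
/- Let d ≥ 1, let h_1,…,h_d > 0, λ_1,…,λ_d > 0 and L > 0. Then the minimax interpolation error inf over measurable kernels K̂ : ℝ^d → ℝ of the supremum over F ∈ 𝓕(L, λ) of Φ_H(F, K̂) equals (L / (2π²)) · max_{i ∈ {1,…,d}} (h_i / λ_i)². -/
open MeasureTheory Real

/-- The interpolation-error functional
`Φ_H(F, K̂) = ∫_{ℝ^d} F(ω) [(1 − K̂(ω))² + ∑_{k ∈ ℤ^d, k ≠ 0} K̂(ω + H⁻¹k)²] dω`,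
where `H = diag(h₁,…,h_d)` and the inner sum is a (possibly infinite) sum of
nonnegative terms, so the value is taken in `ℝ≥0∞`. -/
noncomputable def Phi (d : ℕ) (h : Fin d → ℝ) (F : (Fin d → ℝ) → ℝ)
    (K : (Fin d → ℝ) → ℝ) : ENNReal :=
  ∫⁻ ω : Fin d → ℝ, ENNReal.ofReal (F ω) *
    (ENNReal.ofReal ((1 - K ω) ^ 2) +
      ∑' k : {k : Fin d → ℤ // k ≠ 0},
        ENNReal.ofReal ((K (ω + fun i => (k.1 i : ℝ) / h i)) ^ 2))

/-- The smoothness class `𝓕(L, λ)` of spectral densities: measurable, integrable,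
nonnegative `F` with `(2π)² ∫ F(ω) ∑ᵢ λᵢ² ωᵢ² dω ≤ L`. -/
def SpecClass (d : ℕ) (L : ℝ) (lam : Fin d → ℝ) : Set ((Fin d → ℝ) → ℝ) :=
  {F | Measurable F ∧ Integrable F ∧ (∀ ω, 0 ≤ F ω) ∧
    ENNReal.ofReal ((2 * π) ^ 2) *
      ∫⁻ ω : Fin d → ℝ, ENNReal.ofReal (F ω * ∑ i, (lam i) ^ 2 * (ω i) ^ 2)
        ≤ ENNReal.ofReal L}

/-!
Write `k / h` for the frequency shift `H⁻¹k`, and `E` for the bracket in the integrand of `Φ_H`.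

Lower bound: `(1 - a)² + b² + (1 - b)² + a² ≥ 1` gives `E ω + E (ω + k / h) ≥ 1` for every kernel
and every `k ≠ 0`, so no kernel does well on spectra shared equally between small neighbourhoods
of `-k / (2h)` and `k / (2h)`. The best choice of `k` is the basis vector maximising `hᵢ / λᵢ`.

Upper bound: after rescaling to `h = 1`, the kernel `K x = max 0 (1 - N x)`, with `N x` the sum of
the two largest `|xᵢ|`, satisfies `E x ≤ 2 ∑ xᵢ²`. Adding `K x²` to both sides turns this into
`1 + S ≤ 2 (∑ xᵢ² + K x)`, where `S` is the sum of `K²` over the orbit `x + ℤᵈ`. If `u` is the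
point of the orbit in `[-1/2, 1/2]ᵈ` and `m ≥ z` are its two largest absolute coordinates, then `K`
is at most `1 - m - z` and `m - z` at two points of the orbit and vanishes at all others, while
`N x - ∑ xᵢ² ≤ (m - m²) + (z - z²)` because `|t| - t²` cannot increase when `t ∈ [-1/2, 1/2]` is
shifted by an integer.
-/

section IntegerShift

lemma one_sub_abs_le_abs_add_intCast (t : ℝ) {n : ℤ} (hn : n ≠ 0) : 1 - |t| ≤ |t + n| := by
  have one_le : (1 : ℝ) ≤ |(n : ℝ)| := mod_cast Int.one_le_abs hn
  have triangle : |(n : ℝ)| ≤ |t + n| + |t| := by simpa using abs_sub (t + n) t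
  linarith

lemma abs_le_abs_add_intCast {t : ℝ} (ht : |t| ≤ 1 / 2) (n : ℤ) : |t| ≤ |t + n| := by
  rcases eq_or_ne n 0 with rfl | hn
  · simp
  · linarith [one_sub_abs_le_abs_add_intCast t hn]

lemma exists_int_forall_ne_one_le_abs_add {t : ℝ} (ht : |t| ≤ 1) :
    ∃ σ : ℤ, σ ≠ 0 ∧ ∀ n : ℤ, n ≠ 0 → n ≠ σ → 1 ≤ |t + n| := by
  obtain ⟨neg_one_le, le_one⟩ := abs_le.mp ht
  rcases le_total 0 t with t_nonneg | t_nonpos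
  · refine ⟨-1, by norm_num, fun n hn0 hnσ => le_abs'.mpr ?_⟩
    rcases (by lia : n ≤ -2 ∨ 1 ≤ n) with hn | hn
    · have : (n : ℝ) ≤ -2 := mod_cast hn
      left; linarith
    · have : (1 : ℝ) ≤ n := mod_cast hn
      right; linarith
  · refine ⟨1, by norm_num, fun n hn0 hnσ => le_abs'.mpr ?_⟩
    rcases (by lia : n ≤ -1 ∨ 2 ≤ n) with hn | hn
    · have : (n : ℝ) ≤ -1 := mod_cast hn
      left; linarith
    · have : (2 : ℝ) ≤ n := mod_cast hn
      right; linarith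

/-- The even function equal to the parabola `t (1 - t)` for `t ≥ 0`: the amount by which one
coordinate can pull `∑ xᵢ² + (1 - ∑ |xᵢ|)` below `1`. -/
def absSubSq (t : ℝ) : ℝ := |t| - t ^ 2

lemma absSubSq_le_absSubSq {s t : ℝ} (hst : |s| ≤ |t|) (ht : |t| ≤ 1 / 2) :
    absSubSq s ≤ absSubSq t := by
  rw [absSubSq, absSubSq, ← sq_abs s, ← sq_abs t]
  nlinarith

lemma absSubSq_add_intCast_le {t : ℝ} (ht : |t| ≤ 1 / 2) (n : ℤ) :
    absSubSq (t + n) ≤ absSubSq t := by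
  rcases eq_or_ne n 0 with rfl | hn
  · simp
  · rw [absSubSq, absSubSq, ← sq_abs (t + n), ← sq_abs t]
    nlinarith [abs_le_abs_add_intCast ht n, one_sub_abs_le_abs_add_intCast t hn]

end IntegerShift

section TopTwo

variable {ι : Type*} [DecidableEq ι]

/-- The sum of the two largest absolute values of the entries of `w` (of the single one in
dimension one). Zeroing the entry `i` before choosing the second index `j` lets `j = i` contribute
nothing, so that no lower bound on the dimension is needed. -/
noncomputable def topTwoAbs (w : ι → ℝ) : ℝ :=
  ⨆ ij : ι × ι, (|w ij.1| + |Function.update w ij.1 0 ij.2|)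

lemma abs_add_abs_update_le_topTwoAbs [Finite ι] (w : ι → ℝ) (i j : ι) :
    |w i| + |Function.update w i 0 j| ≤ topTwoAbs w :=
  le_ciSup (f := fun ij : ι × ι => |w ij.1| + |Function.update w ij.1 0 ij.2|)
    (Set.finite_range _).bddAbove (i, j)

lemma abs_le_topTwoAbs [Finite ι] (w : ι → ℝ) (i : ι) : |w i| ≤ topTwoAbs w := by
  simpa using abs_add_abs_update_le_topTwoAbs w i i

lemma abs_add_abs_le_topTwoAbs [Finite ι] (w : ι → ℝ) {i j : ι} (hij : i ≠ j) :
    |w i| + |w j| ≤ topTwoAbs w := by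
  simpa [hij.symm] using abs_add_abs_update_le_topTwoAbs w i j

lemma exists_topTwoAbs_eq [Finite ι] [Nonempty ι] (w : ι → ℝ) :
    ∃ i j, topTwoAbs w = |w i| + |Function.update w i 0 j| := by
  obtain ⟨⟨i, j⟩, hij⟩ := exists_eq_ciSup_of_finite
    (f := fun ij : ι × ι => |w ij.1| + |Function.update w ij.1 0 ij.2|)
  exact ⟨i, j, hij.symm⟩

lemma measurable_topTwoAbs [Finite ι] : Measurable (topTwoAbs : (ι → ℝ) → ℝ) := by
  refine Measurable.iSup fun ⟨i, j⟩ => (measurable_pi_apply i).abs.add (Measurable.abs ?_)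
  rcases eq_or_ne j i with rfl | hji
  · simp
  · simpa [hji] using measurable_pi_apply j

lemma sq_add_sq_update_le_sum_sq [Fintype ι] (w : ι → ℝ) (i j : ι) :
    w i ^ 2 + Function.update w i 0 j ^ 2 ≤ ∑ l, w l ^ 2 := by
  rcases eq_or_ne j i with rfl | hji
  · simpa using Finset.single_le_sum (f := fun l => w l ^ 2) (fun _ _ => sq_nonneg _)
      (Finset.mem_univ j)
  · simpa [hji, Finset.sum_pair hji.symm] using
      Finset.sum_le_univ_sum_of_nonneg (s := {i, j}) fun l => sq_nonneg (w l)

lemma exists_topTwoAbs_sub_sum_sq_le [Fintype ι] [Nonempty ι] (w : ι → ℝ) :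
    ∃ i j, topTwoAbs w - ∑ l, w l ^ 2 ≤ absSubSq (w i) + absSubSq (Function.update w i 0 j) := by
  obtain ⟨i, j, hij⟩ := exists_topTwoAbs_eq w
  exact ⟨i, j, by simp only [absSubSq]; linarith [sq_add_sq_update_le_sum_sq w i j]⟩

section Reduced

variable {u : ι → ℝ} (hu : ∀ i, |u i| ≤ 1 / 2) {p b : ι} (hp : ∀ i, |u i| ≤ |u p|)
include hu hp

lemma absSubSq_add_absSubSq_update_le
    (hb : ∀ j, |Function.update u p 0 j| ≤ |Function.update u p 0 b|) (i j : ι) :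
    absSubSq (u i) + absSubSq (Function.update u i 0 j) ≤
      absSubSq (u p) + absSubSq (Function.update u p 0 b) := by
  have abs_update_le (i j : ι) : |Function.update u i 0 j| ≤ |u p| := by
    rcases eq_or_ne j i with rfl | hji
    · simp
    · simpa [hji] using hp j
  have le_second {t : ℝ} (ht : |t| ≤ |Function.update u p 0 b|) :
      absSubSq t ≤ absSubSq (Function.update u p 0 b) :=
    absSubSq_le_absSubSq ht ((abs_update_le p b).trans (hu p))
  rcases eq_or_ne i p with rfl | hip
  · gcongr
    exact le_second (hb j)
  · rw [add_comm]
    exact add_le_add (absSubSq_le_absSubSq (abs_update_le i j) (hu p))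
      (le_second (by simpa [hip] using hb i))

lemma topTwoAbs_sub_sum_sq_add_intCast_le [Fintype ι]
    (hb : ∀ j, |Function.update u p 0 j| ≤ |Function.update u p 0 b|) (k : ι → ℤ) :
    topTwoAbs (fun i => u i + k i) - ∑ i, (u i + k i) ^ 2 ≤
      absSubSq (u p) + absSubSq (Function.update u p 0 b) := by
  have : Nonempty ι := ⟨p⟩
  obtain ⟨i, j, hij⟩ := exists_topTwoAbs_sub_sum_sq_le fun i => u i + k i
  have update_le : absSubSq (Function.update (fun i => u i + k i) i 0 j) ≤
      absSubSq (Function.update u i 0 j) := by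
    rcases eq_or_ne j i with rfl | hji
    · simp
    · simpa [hji] using absSubSq_add_intCast_le (hu j) (k j)
  linarith [absSubSq_add_intCast_le (hu i) (k i), absSubSq_add_absSubSq_update_le hu hp hb i j]

lemma one_le_topTwoAbs_add_intCast [Finite ι] {σ : ℤ}
    (hσ : ∀ n : ℤ, n ≠ 0 → n ≠ σ → 1 ≤ |u p + n|) {k : ι → ℤ} (hk0 : k ≠ 0)
    (hkσ : k ≠ Pi.single p σ) : 1 ≤ topTwoAbs (fun i => u i + k i) := by
  by_cases hother : ∃ i, i ≠ p ∧ k i ≠ 0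
  · obtain ⟨i, hip, hki⟩ := hother
    linarith [abs_add_abs_le_topTwoAbs (fun i => u i + k i) hip, hp i,
      one_sub_abs_le_abs_add_intCast (u i) hki, abs_le_abs_add_intCast (hu p) (k p)]
  · push Not at hother
    have k_eq : k = Pi.single p (k p) := by
      ext i
      rcases eq_or_ne i p with rfl | hip
      · simp
      · simp [hip, hother i hip]
    refine (hσ (k p) (fun h0 => hk0 ?_) fun hpσ => hkσ (hpσ ▸ k_eq)).trans
      (abs_le_topTwoAbs (fun i => u i + k i) p)
    rw [k_eq, h0, Pi.single_zero]

end Reduced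

end TopTwo

section TentKernel

variable {ι : Type*} [DecidableEq ι]

/-- The minimax-optimal kernel on the unit lattice. In dimension one it is the triangle
`max 0 (1 - |x|)`. -/
noncomputable def tentKernel (x : ι → ℝ) : ℝ := max 0 (1 - topTwoAbs x)

lemma measurable_tentKernel [Finite ι] : Measurable (tentKernel : (ι → ℝ) → ℝ) :=
  measurable_const.max (measurable_topTwoAbs.const_sub 1)

lemma tentKernel_eq_zero {x : ι → ℝ} (hx : 1 ≤ topTwoAbs x) : tentKernel x = 0 :=
  max_eq_left (by linarith)

lemma tentKernel_sq_le {x : ι → ℝ} {a : ℝ} (ha : 0 ≤ a) (hx : 1 - a ≤ topTwoAbs x) :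
    tentKernel x ^ 2 ≤ a ^ 2 :=
  pow_le_pow_left₀ (le_max_left _ _) (max_le ha (by linarith)) 2

lemma tsum_tentKernel_sq_reduced_le [Finite ι] {u : ι → ℝ} (hu : ∀ i, |u i| ≤ 1 / 2) {p : ι}
    (hp : ∀ i, |u i| ≤ |u p|) (b : ι) :
    ∑' k : ι → ℤ, ENNReal.ofReal (tentKernel (fun i => u i + k i) ^ 2) ≤
      ENNReal.ofReal ((1 - |u p| - |Function.update u p 0 b|) ^ 2 +
        (|u p| - |Function.update u p 0 b|) ^ 2) := by
  classical
  obtain ⟨σ, hσ0, hσ⟩ := exists_int_forall_ne_one_le_abs_add ((hu p).trans (by norm_num))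
  have second_le : |Function.update u p 0 b| ≤ |u p| := by
    rcases eq_or_ne b p with rfl | hbp
    · simp
    · simpa [hbp] using hp b
  have single_ne_zero : (0 : ι → ℤ) ≠ Pi.single p σ := (Pi.single_ne_zero_iff.mpr hσ0).symm
  have at_zero : tentKernel (fun i => u i + (0 : ι → ℤ) i) ^ 2 ≤
      (1 - |u p| - |Function.update u p 0 b|) ^ 2 :=
    tentKernel_sq_le (by linarith [hu p]) (by
      simpa using by linarith [abs_add_abs_update_le_topTwoAbs u p b])
  have at_single : tentKernel (fun i => u i + (Pi.single p σ : ι → ℤ) i) ^ 2 ≤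
      (|u p| - |Function.update u p 0 b|) ^ 2 := by
    refine tentKernel_sq_le (sub_nonneg.mpr second_le) ?_
    have update_eq : Function.update (fun i => u i + (Pi.single p σ : ι → ℤ) i) p 0 =
        Function.update u p 0 := by
      ext i
      rcases eq_or_ne i p with rfl | hip <;> simp [*]
    have := abs_add_abs_update_le_topTwoAbs (fun i => u i + (Pi.single p σ : ι → ℤ) i) p b
    rw [update_eq, Pi.single_eq_same] at this
    linarith [one_sub_abs_le_abs_add_intCast (u p) hσ0]
  rw [tsum_eq_sum (s := {0, Pi.single p σ}), Finset.sum_pair single_ne_zero,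
    ← ENNReal.ofReal_add (sq_nonneg _) (sq_nonneg _)]
  · exact ENNReal.ofReal_le_ofReal (add_le_add at_zero at_single)
  · intro k hk
    simp only [Finset.mem_insert, Finset.mem_singleton, not_or] at hk
    simp [tentKernel_eq_zero (one_le_topTwoAbs_add_intCast hu hp hσ hk.1 hk.2)]

lemma exists_tsum_tentKernel_sq_le [Fintype ι] [Nonempty ι] (x : ι → ℝ) :
    ∃ c : ℝ, 0 ≤ c ∧
      ∑' k : ι → ℤ, ENNReal.ofReal (tentKernel (fun i => x i + k i) ^ 2) ≤ ENNReal.ofReal c ∧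
      1 + c ≤ 2 * (∑ i, x i ^ 2 + tentKernel x) := by
  let r : ι → ℤ := fun i => round (x i)
  let u : ι → ℝ := fun i => x i - r i
  have hu (i : ι) : |u i| ≤ 1 / 2 := abs_sub_round (x i)
  have x_eq (i : ι) : u i + r i = x i := sub_add_cancel _ _
  obtain ⟨p, hp⟩ := Finite.exists_max fun i => |u i|
  obtain ⟨b, hb⟩ := Finite.exists_max fun j => |Function.update u p 0 j|
  refine ⟨(1 - |u p| - |Function.update u p 0 b|) ^ 2 + (|u p| - |Function.update u p 0 b|) ^ 2,
    by positivity, ?_, ?_⟩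
  · refine Eq.trans_le ?_ (tsum_tentKernel_sq_reduced_le hu hp b)
    rw [← (Equiv.addLeft (-r)).tsum_eq]
    simp [u, sub_eq_add_neg, add_assoc]
  · have bound := topTwoAbs_sub_sum_sq_add_intCast_le hu hp hb r
    simp only [x_eq, absSubSq] at bound
    have tent_ge : 1 - topTwoAbs x ≤ tentKernel x := le_max_right _ _
    linarith [sq_abs (u p), sq_abs (Function.update u p 0 b)]

end TentKernel

section PointwiseError

variable {ι : Type*} (h : ι → ℝ) (K : (ι → ℝ) → ℝ)

/-- The bracket in the integrand of `Phi`: the squared interpolation error at frequency `ω`. -/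
noncomputable def pointwiseError (ω : ι → ℝ) : ENNReal :=
  ENNReal.ofReal ((1 - K ω) ^ 2) +
    ∑' k : {k : ι → ℤ // k ≠ 0}, ENNReal.ofReal (K (ω + fun i => (k.1 i : ℝ) / h i) ^ 2)

lemma measurable_pointwiseError [Finite ι] {K : (ι → ℝ) → ℝ} (hK : Measurable K) :
    Measurable (pointwiseError h K) :=
  ((hK.const_sub 1).pow_const 2).ennreal_ofReal.add <| Measurable.tsum fun _ =>
    ((hK.comp (measurable_id.add_const _)).pow_const 2).ennreal_ofReal

lemma pointwiseError_add_sq (ω : ι → ℝ) :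
    pointwiseError h K ω + ENNReal.ofReal (K ω ^ 2) = ENNReal.ofReal ((1 - K ω) ^ 2) +
      ∑' k : ι → ℤ, ENNReal.ofReal (K (ω + fun i => (k i : ℝ) / h i) ^ 2) := by
  have shift_zero : ω + (fun i => ((0 : ι → ℤ) i : ℝ) / h i) = ω := by simp [← Pi.zero_def]
  rw [← ENNReal.summable.tsum_add_tsum_compl (s := {0}) ENNReal.summable,
    tsum_singleton 0 fun k : ι → ℤ => ENNReal.ofReal (K (ω + fun i => (k i : ℝ) / h i) ^ 2),
    shift_zero, pointwiseError, add_assoc, add_comm (tsum _)]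
  rfl

lemma pointwiseError_le_of_tsum_le {ω : ι → ℝ} {c q : ℝ} (hc : 0 ≤ c) (hq : 0 ≤ q)
    (hsum : ∑' k : ι → ℤ, ENNReal.ofReal (K (ω + fun i => (k i : ℝ) / h i) ^ 2) ≤
      ENNReal.ofReal c)
    (hcq : 1 + c ≤ q + 2 * K ω) : pointwiseError h K ω ≤ ENNReal.ofReal q := by
  rw [← ENNReal.add_le_add_iff_right (ENNReal.ofReal_ne_top (r := K ω ^ 2)),
    pointwiseError_add_sq, ← ENNReal.ofReal_add hq (sq_nonneg _)]
  calc _ ≤ ENNReal.ofReal ((1 - K ω) ^ 2) + ENNReal.ofReal c := by gcongr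
    _ = ENNReal.ofReal ((1 - K ω) ^ 2 + c) := (ENNReal.ofReal_add (sq_nonneg _) hc).symm
    _ ≤ _ := ENNReal.ofReal_le_ofReal (by linarith)

lemma pointwiseError_tentKernel_le [Fintype ι] [DecidableEq ι] [Nonempty ι] {h : ι → ℝ}
    (hh : ∀ i, h i ≠ 0) (ω : ι → ℝ) :
    pointwiseError h (fun ω => tentKernel fun i => h i * ω i) ω ≤
      ENNReal.ofReal (2 * ∑ i, (h i * ω i) ^ 2) := by
  obtain ⟨c, hc, hsum, hcq⟩ := exists_tsum_tentKernel_sq_le fun i => h i * ω i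
  refine pointwiseError_le_of_tsum_le h _ hc (by positivity) ?_ (by linarith)
  simpa [mul_add, mul_div_cancel₀, hh] using hsum

lemma sq_add_sq_le_pointwiseError (ω : ι → ℝ) {k : ι → ℤ} (hk : k ≠ 0) :
    ENNReal.ofReal ((1 - K ω) ^ 2 + K (ω + fun i => (k i : ℝ) / h i) ^ 2) ≤
      pointwiseError h K ω := by
  rw [ENNReal.ofReal_add (sq_nonneg _) (sq_nonneg _), pointwiseError]
  gcongr
  exact ENNReal.le_tsum (f := fun k : {k : ι → ℤ // k ≠ 0} =>
    ENNReal.ofReal (K (ω + fun i => (k.1 i : ℝ) / h i) ^ 2)) ⟨k, hk⟩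

lemma one_le_pointwiseError_add (ω : ι → ℝ) {k : ι → ℤ} (hk : k ≠ 0) :
    1 ≤ pointwiseError h K ω + pointwiseError h K (ω + fun i => (k i : ℝ) / h i) := by
  set v : ι → ℝ := fun i => (k i : ℝ) / h i
  have shift_back : ω + v + (fun i => ((-k) i : ℝ) / h i) = ω := by
    ext i
    simp [v, neg_div]
  have at_ω := sq_add_sq_le_pointwiseError h K ω hk
  have at_shift := sq_add_sq_le_pointwiseError h K (ω + v) (neg_ne_zero.mpr hk)
  rw [shift_back] at at_shift
  calc (1 : ENNReal) = ENNReal.ofReal 1 := ENNReal.ofReal_one.symm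
    _ ≤ ENNReal.ofReal ((1 - K ω) ^ 2 + K (ω + v) ^ 2 + ((1 - K (ω + v)) ^ 2 + K ω ^ 2)) :=
        ENNReal.ofReal_le_ofReal
          (by nlinarith [sq_nonneg (2 * K ω - 1), sq_nonneg (2 * K (ω + v) - 1)])
    _ ≤ _ := (ENNReal.ofReal_add (by positivity) (by positivity)).trans_le
        (add_le_add at_ω at_shift)

end PointwiseError

section ShiftedPair

variable {G : Type*} [AddGroup G] {D : Set G} {a : ℝ}

/-- The density with value `a` on `D` and on `v + D`, added up where the two overlap: the
least favourable spectra of the lower bound. -/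
noncomputable def shiftedPair (D : Set G) (v : G) (a : ℝ) (x : G) : ℝ :=
  D.indicator (fun _ => a) x + D.indicator (fun _ => a) (x - v)

lemma shiftedPair_nonneg (ha : 0 ≤ a) (v x : G) : 0 ≤ shiftedPair D v a x :=
  add_nonneg (Set.indicator_nonneg (fun _ _ => ha) _) (Set.indicator_nonneg (fun _ _ => ha) _)

lemma ofReal_shiftedPair (ha : 0 ≤ a) (v x : G) :
    ENNReal.ofReal (shiftedPair D v a x) =
      D.indicator (fun _ => ENNReal.ofReal a) x +
        D.indicator (fun _ => ENNReal.ofReal a) (x - v) := by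
  have ofReal_indicator (y : G) : ENNReal.ofReal (D.indicator (fun _ => a) y) =
      D.indicator (fun _ => ENNReal.ofReal a) y := by
    by_cases hy : y ∈ D <;> simp [hy]
  rw [shiftedPair, ENNReal.ofReal_add (Set.indicator_nonneg (fun _ _ => ha) _)
    (Set.indicator_nonneg (fun _ _ => ha) _), ofReal_indicator, ofReal_indicator]

variable [MeasurableSpace G]

lemma measurable_shiftedPair [MeasurableSub G] (hD : MeasurableSet D) (v : G) (a : ℝ) :
    Measurable (shiftedPair D v a) :=
  (measurable_const.indicator hD).add
    ((measurable_const.indicator hD).comp (measurable_sub_const v))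

variable [MeasurableAdd G] {μ : Measure G} [μ.IsAddRightInvariant]

lemma integrable_shiftedPair (hD : MeasurableSet D) (hDtop : μ D ≠ ⊤) (v : G) (a : ℝ) :
    Integrable (shiftedPair D v a) μ := by
  have bump : Integrable (D.indicator fun _ => a) μ :=
    (integrable_indicator_iff hD).mpr (integrableOn_const hDtop)
  exact bump.add (bump.comp_sub_right v)

lemma lintegral_shiftedPair_mul (hD : MeasurableSet D) (ha : 0 ≤ a) (v : G)
    {g : G → ENNReal} (hg : Measurable g) :
    ∫⁻ x, ENNReal.ofReal (shiftedPair D v a x) * g x ∂μ =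
      ENNReal.ofReal a * ∫⁻ x in D, (g x + g (x + v)) ∂μ := by
  have weighted (f : G → ENNReal) (hf : Measurable f) :
      ∫⁻ x, D.indicator (fun _ => ENNReal.ofReal a) x * f x ∂μ =
        ENNReal.ofReal a * ∫⁻ x in D, f x ∂μ := by
    simp_rw [← Set.indicator_mul_left]
    rw [lintegral_indicator hD, lintegral_const_mul _ hf]
  simp_rw [ofReal_shiftedPair ha, add_mul]
  rw [lintegral_add_left (by fun_prop (disch := exact hD)), weighted g hg,
    ← lintegral_add_right_eq_self (fun x => _ * g x) v]
  simp_rw [add_sub_cancel_right]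
  rw [weighted (fun x => g (x + v)) (by fun_prop), lintegral_add_left hg, mul_add]

end ShiftedPair

section Minimax

variable {d : ℕ} {h lam : Fin d → ℝ} {L : ℝ}

lemma phi_le_of_pointwiseError_le {F K : (Fin d → ℝ) → ℝ} {C : ℝ} (hC : 0 ≤ C)
    (hK : ∀ ω, pointwiseError h K ω ≤
      ENNReal.ofReal (C * ((2 * π) ^ 2 * ∑ i, lam i ^ 2 * ω i ^ 2)))
    (hF : F ∈ SpecClass d L lam) : Phi d h F K ≤ ENNReal.ofReal (C * L) := by
  obtain ⟨-, -, F_nonneg, F_energy⟩ := hF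
  calc Phi d h F K = ∫⁻ ω, ENNReal.ofReal (F ω) * pointwiseError h K ω := rfl
    _ ≤ ∫⁻ ω, ENNReal.ofReal C * (ENNReal.ofReal ((2 * π) ^ 2) *
          ENNReal.ofReal (F ω * ∑ i, lam i ^ 2 * ω i ^ 2)) := by
        refine lintegral_mono fun ω => (mul_le_mul_right (hK ω) _).trans_eq ?_
        rw [← ENNReal.ofReal_mul (F_nonneg ω), ← ENNReal.ofReal_mul (by positivity),
          ← ENNReal.ofReal_mul hC]
        ring_nf
    _ = ENNReal.ofReal C * (ENNReal.ofReal ((2 * π) ^ 2) *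
          ∫⁻ ω, ENNReal.ofReal (F ω * ∑ i, lam i ^ 2 * ω i ^ 2)) := by
        rw [lintegral_const_mul' _ _ ENNReal.ofReal_ne_top,
          lintegral_const_mul' _ _ ENNReal.ofReal_ne_top]
    _ ≤ ENNReal.ofReal C * ENNReal.ofReal L := by gcongr
    _ = ENNReal.ofReal (C * L) := (ENNReal.ofReal_mul hC).symm

lemma phi_tentKernel_le [Nonempty (Fin d)] (hh : ∀ i, h i ≠ 0) (hlam : ∀ i, lam i ≠ 0) {M : ℝ}
    (hM : ∀ i, (h i / lam i) ^ 2 ≤ M) {F : (Fin d → ℝ) → ℝ} (hF : F ∈ SpecClass d L lam) :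
    Phi d h F (fun ω => tentKernel fun i => h i * ω i) ≤ ENNReal.ofReal (L / (2 * π ^ 2) * M) := by
  have M_nonneg : 0 ≤ M := (sq_nonneg _).trans (hM (Classical.arbitrary _))
  have sq_le (ω : Fin d → ℝ) (i : Fin d) : (h i * ω i) ^ 2 ≤ M * (lam i ^ 2 * ω i ^ 2) := by
    have := (div_le_iff₀ (sq_pos_of_ne_zero (hlam i))).mp (div_pow (h i) (lam i) 2 ▸ hM i)
    nlinarith [mul_le_mul_of_nonneg_right this (sq_nonneg (ω i))]
  rw [show L / (2 * π ^ 2) * M = M / (2 * π ^ 2) * L by ring]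
  refine phi_le_of_pointwiseError_le (by positivity) (fun ω => ?_) hF
  refine (pointwiseError_tentKernel_le hh ω).trans (ENNReal.ofReal_le_ofReal ?_)
  calc 2 * ∑ i, (h i * ω i) ^ 2 ≤ 2 * ∑ i, M * (lam i ^ 2 * ω i ^ 2) := by gcongr; exact sq_le ω _
    _ = M / (2 * π ^ 2) * ((2 * π) ^ 2 * ∑ i, lam i ^ 2 * ω i ^ 2) := by
        rw [← Finset.mul_sum]
        field_simp

section TwoPoint

variable {D : Set (Fin d → ℝ)} {v : Fin d → ℝ} {a R : ℝ}

lemma shiftedPair_mem_specClass (hD : MeasurableSet D) (hDtop : volume D ≠ ⊤) (ha : 0 ≤ a)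
    (hR : 0 ≤ R) (hDR : ∀ ω ∈ D, ∑ i, lam i ^ 2 * ω i ^ 2 ≤ R)
    (hDvR : ∀ ω ∈ D, ∑ i, lam i ^ 2 * (ω + v) i ^ 2 ≤ R)
    (hL : (2 * π) ^ 2 * (a * (2 * R * volume.real D)) ≤ L) :
    shiftedPair D v a ∈ SpecClass d L lam := by
  refine ⟨measurable_shiftedPair hD v a, integrable_shiftedPair hD hDtop v a,
    shiftedPair_nonneg ha v, ?_⟩
  have energy_le : ∫⁻ ω in D, (ENNReal.ofReal (∑ i, lam i ^ 2 * ω i ^ 2) +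
      ENNReal.ofReal (∑ i, lam i ^ 2 * (ω + v) i ^ 2)) ≤
        ENNReal.ofReal (2 * R * volume.real D) := by
    rw [ENNReal.ofReal_mul (by positivity), ofReal_measureReal hDtop, ← setLIntegral_const]
    refine setLIntegral_mono measurable_const fun ω hω => ?_
    rw [two_mul, ENNReal.ofReal_add hR hR]
    exact add_le_add (ENNReal.ofReal_le_ofReal (hDR ω hω)) (ENNReal.ofReal_le_ofReal (hDvR ω hω))
  simp_rw [ENNReal.ofReal_mul (shiftedPair_nonneg ha v _)]
  rw [lintegral_shiftedPair_mul hD ha v (by fun_prop)]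
  calc _ ≤ ENNReal.ofReal ((2 * π) ^ 2) *
        (ENNReal.ofReal a * ENNReal.ofReal (2 * R * volume.real D)) := by gcongr
    _ = ENNReal.ofReal ((2 * π) ^ 2 * (a * (2 * R * volume.real D))) := by
        rw [← ENNReal.ofReal_mul ha, ← ENNReal.ofReal_mul (by positivity)]
    _ ≤ ENNReal.ofReal L := ENNReal.ofReal_le_ofReal hL

lemma ofReal_mul_volume_le_phi_shiftedPair (hD : MeasurableSet D) (ha : 0 ≤ a)
    {K : (Fin d → ℝ) → ℝ} (hK : Measurable K) {k : Fin d → ℤ} (hk : k ≠ 0) :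
    ENNReal.ofReal a * volume D ≤ Phi d h (shiftedPair D (fun i => (k i : ℝ) / h i) a) K := by
  change _ ≤ ∫⁻ ω, _ * pointwiseError h K ω
  rw [lintegral_shiftedPair_mul hD ha _ (measurable_pointwiseError h hK), ← setLIntegral_one]
  gcongr with ω
  exact one_le_pointwiseError_add h K ω hk

lemma le_iSup_phi_of_sum_le_on (hL : 0 ≤ L) (hD : MeasurableSet D) (hD0 : volume D ≠ 0)
    (hDtop : volume D ≠ ⊤) {K : (Fin d → ℝ) → ℝ} (hK : Measurable K) {k : Fin d → ℤ} (hk : k ≠ 0)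
    (hR : 0 < R) (hDR : ∀ ω ∈ D, ∑ i, lam i ^ 2 * ω i ^ 2 ≤ R)
    (hDkR : ∀ ω ∈ D, ∑ i, lam i ^ 2 * (ω + fun i => (k i : ℝ) / h i) i ^ 2 ≤ R) :
    ENNReal.ofReal (L / (2 * (2 * π) ^ 2 * R)) ≤ ⨆ F ∈ SpecClass d L lam, Phi d h F K := by
  have volume_pos : 0 < volume.real D := ENNReal.toReal_pos hD0 hDtop
  set a : ℝ := L / (2 * (2 * π) ^ 2 * R) / volume.real D with a_def
  have ha : 0 ≤ a := by positivity
  have mem := shiftedPair_mem_specClass (L := L) hD hDtop ha hR.le hDR hDkR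
    (by rw [a_def]; field_simp; rfl)
  calc ENNReal.ofReal (L / (2 * (2 * π) ^ 2 * R)) = ENNReal.ofReal a * volume D := by
        rw [← ofReal_measureReal hDtop, ← ENNReal.ofReal_mul ha, div_mul_cancel₀ _ volume_pos.ne']
    _ ≤ Phi d h _ K := ofReal_mul_volume_le_phi_shiftedPair hD ha hK hk
    _ ≤ _ := le_iSup₂ (f := fun F (_ : F ∈ SpecClass d L lam) => Phi d h F K) _ mem

end TwoPoint

lemma le_iSup_phi_of_lt (hL : 0 ≤ L) {K : (Fin d → ℝ) → ℝ} (hK : Measurable K) {k : Fin d → ℤ}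
    (hk : k ≠ 0) {R : ℝ} (hR : (∑ i, lam i ^ 2 * (k i / h i) ^ 2) / 4 < R) :
    ENNReal.ofReal (L / (2 * (2 * π) ^ 2 * R)) ≤ ⨆ F ∈ SpecClass d L lam, Phi d h F K := by
  set v : Fin d → ℝ := fun i => (k i : ℝ) / h i
  set c : Fin d → ℝ := fun i => -(v i / 2)
  let D : Set (Fin d → ℝ) := Metric.ball c 1 ∩
    ({ω | ∑ i, lam i ^ 2 * ω i ^ 2 < R} ∩ {ω | ∑ i, lam i ^ 2 * (ω + v) i ^ 2 < R})
  have D_open : IsOpen D := Metric.isOpen_ball.inter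
    ((isOpen_lt (by fun_prop) continuous_const).inter (isOpen_lt (by fun_prop) continuous_const))
  have c_mem : c ∈ D := by
    have at_midpoint (s : Fin d → ℝ) (hs : ∀ i, s i ^ 2 = v i ^ 2 / 4) :
        ∑ i, lam i ^ 2 * s i ^ 2 < R := by
      simpa only [hs, mul_div_assoc', Finset.sum_div] using hR
    refine ⟨Metric.mem_ball_self one_pos, at_midpoint _ fun i => ?_, at_midpoint _ fun i => ?_⟩
    · simp only [c]; ring
    · simp only [c, Pi.add_apply]; ring
  have R_pos : 0 < R := lt_of_le_of_lt (by positivity) hR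
  exact le_iSup_phi_of_sum_le_on hL D_open.measurableSet (D_open.measure_pos volume ⟨c, c_mem⟩).ne'
    (measure_ne_top_of_subset Set.inter_subset_left measure_ball_lt_top.ne) hK hk R_pos
    (fun ω hω => le_of_lt hω.2.1) fun ω hω => le_of_lt hω.2.2

lemma le_iSup_phi (hL : 0 ≤ L) {K : (Fin d → ℝ) → ℝ} (hK : Measurable K) {k : Fin d → ℤ}
    (hk : 0 < ∑ i, lam i ^ 2 * (k i / h i) ^ 2) :
    ENNReal.ofReal (L / (2 * π ^ 2 * ∑ i, lam i ^ 2 * (k i / h i) ^ 2)) ≤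
      ⨆ F ∈ SpecClass d L lam, Phi d h F K := by
  set Q := ∑ i, lam i ^ 2 * (k i / h i) ^ 2 with Q_def
  have k_ne_zero : k ≠ 0 := by
    rintro rfl
    simp [Q_def] at hk
  have bound_continuousAt :
      ContinuousAt (fun R => ENNReal.ofReal (L / (2 * (2 * π) ^ 2 * R))) (Q / 4) :=
    ENNReal.continuous_ofReal.continuousAt.comp
      (continuousAt_const.div (by fun_prop) (by positivity))
  rw [show 2 * π ^ 2 * Q = 2 * (2 * π) ^ 2 * (Q / 4) by ring]
  refine le_of_tendsto (bound_continuousAt.mono_left (nhdsWithin_le_nhds (s := Set.Ioi (Q / 4)))) ?_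
  filter_upwards [self_mem_nhdsWithin] with R hR
  exact le_iSup_phi_of_lt hL hK k_ne_zero hR

lemma ofReal_mul_div_sq_le_iSup_phi (hL : 0 ≤ L) {K : (Fin d → ℝ) → ℝ} (hK : Measurable K)
    {p : Fin d} (hp : h p ≠ 0) (hlam : lam p ≠ 0) :
    ENNReal.ofReal (L / (2 * π ^ 2) * (h p / lam p) ^ 2) ≤
      ⨆ F ∈ SpecClass d L lam, Phi d h F K := by
  have energy_single : ∑ i, lam i ^ 2 * ((Pi.single p 1 : Fin d → ℤ) i / h i) ^ 2 =
      (lam p / h p) ^ 2 := by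
    rw [Fintype.sum_eq_single p fun i hi => by simp [hi]]
    simp [div_eq_mul_inv, mul_pow]
  have := le_iSup_phi (lam := lam) (h := h) hL hK (k := Pi.single p 1)
    (by rw [energy_single]; positivity)
  rwa [energy_single, ← div_div, div_eq_mul_inv _ ((lam p / h p) ^ 2), ← inv_pow, inv_div] at this

end Minimax

/-- The minimax interpolation error over the smoothness class `𝓕(L, λ)` equals
`(L/(2π²)) · maxᵢ (hᵢ/λᵢ)²`. -/
theorem minimax_interpolation_error (d : ℕ) (hd : 1 ≤ d) (h lam : Fin d → ℝ)
    (hh : ∀ i, 0 < h i) (hlam : ∀ i, 0 < lam i) (L : ℝ) (hL : 0 < L) :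
    (⨅ K ∈ {K : (Fin d → ℝ) → ℝ | Measurable K},
        ⨆ F ∈ SpecClass d L lam, Phi d h F K)
      = ENNReal.ofReal (L / (2 * π ^ 2) * ⨆ i : Fin d, (h i / lam i) ^ 2) := by
  have : Nonempty (Fin d) := ⟨⟨0, hd⟩⟩
  apply le_antisymm
  · have kernel_measurable : Measurable fun ω : Fin d → ℝ => tentKernel fun i => h i * ω i :=
      measurable_tentKernel.comp (by fun_prop)
    exact iInf₂_le_of_le _ kernel_measurable <| iSup₂_le fun F hF =>
      phi_tentKernel_le (fun i => (hh i).ne') (fun i => (hlam i).ne')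
        (fun i => le_ciSup (Set.finite_range fun i => (h i / lam i) ^ 2).bddAbove i) hF
  · obtain ⟨p, hp⟩ := exists_eq_ciSup_of_finite (f := fun i => (h i / lam i) ^ 2)
    rw [← hp]
    exact le_iInf₂ fun K hK => ofReal_mul_div_sq_le_iSup_phi hL.le hK (hh p).ne' (hlam p).ne'
end

section
/- Let d ≥ 1, let h_1,…,h_d > 0, λ_1,…,λ_d > 0 and L > 0. Define the kernel K̂*(ω) = 1 − √(∑_{i=1}^d ω_i² h_i²) if ∑_{i=1}^d ω_i² h_i² ≤ 1 and K̂*(ω) = 0 otherwise. Then for every F ∈ 𝓕(L, λ) one has Φ_H(F, K̂*) ≤ (L / (2π²)) · max_{i ∈ {1,…,d}} (h_i / λ_i)². -/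
/-!
In the coordinates `xᵢ = hᵢ ωᵢ` the kernel is `κ(‖x‖)` with `κ(r) = (1 - r)⁺`, and the aliases
of `x` are the points `x + k` with `k ∈ ℤᵈ`. It suffices to show that the error at `x` is at most
`2 ‖x‖²`, since `‖x‖² ≤ maxᵢ (hᵢ / λᵢ)² ∑ᵢ λᵢ² ωᵢ²`. The term `(1 - κ(‖x‖))²`
is clearly at most `‖x‖²`; the point is that `∑_{k ≠ 0} κ(‖x + k‖)² ≤ ‖x‖²` too. This goes by
induction on the dimension: write `x = (t, y)` and `k = (n, m)`. The terms with `m = 0` contribute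
at most `∑_{n ≠ 0} κ(|t + n|)² ≤ t²`. For the others, `κ(‖(t, y)‖) ≤ c(t) κ(‖y‖)` with
`c(t) = ((1 - t²) / (1 + t²))⁺`, and `∑ₙ c(t + n)² ≤ 1` because at most two terms are nonzero
and they are bounded by the squares of the cosine and the sine of one angle.
-/

open MeasureTheory Real

open scoped ENNReal

section Tsum

variable {α β : Type*}

lemma add_tsum_ne_eq_tsum (f : α → ℝ≥0∞) (a : α) : f a + ∑' b : {b // b ≠ a}, f b = ∑' b, f b := by
  classical
  rw [ENNReal.tsum_eq_add_tsum_ite a]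
  refine congrArg (f a + ·) ((tsum_subtype {b | b ≠ a} f).trans (tsum_congr fun b => ?_))
  by_cases hb : b = a <;> simp [hb]

lemma tsum_prod_ne_zero [Zero α] [Zero β] (f : α × β → ℝ≥0∞) :
    ∑' p : {p : α × β // p ≠ 0}, f p =
      ∑' a : {a : α // a ≠ 0}, f (a, 0) + ∑' b : {b : β // b ≠ 0}, ∑' a, f (a, b) := by
  set g : α × β → ℝ≥0∞ := Set.indicator {p | p ≠ 0} f
  have hg {p : α × β} (hp : p ≠ 0) : g p = f p := Set.indicator_of_mem hp f
  have hg_zero : g (0, 0) = 0 := Set.indicator_of_notMem (by simp) f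
  calc ∑' p : {p : α × β // p ≠ 0}, f p
      = ∑' b, ∑' a, g (a, b) := by
        rw [ENNReal.tsum_comm, ← ENNReal.tsum_prod]
        exact tsum_subtype {p : α × β | p ≠ 0} f
    _ = ∑' a : {a : α // a ≠ 0}, g (a, 0) + ∑' b : {b : β // b ≠ 0}, ∑' a, g (a, b) := by
        rw [← add_tsum_ne_eq_tsum _ (0 : β), ← add_tsum_ne_eq_tsum (fun a => g (a, 0)) 0, hg_zero,
          zero_add]
    _ = _ := by
        congr 1
        · exact tsum_congr fun a => hg fun h => a.2 (congrArg Prod.fst h)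
        · exact tsum_congr fun b => tsum_congr fun a => hg fun h => b.2 (congrArg Prod.snd h)

end Tsum

lemma tsum_int_eq_fract {M : Type*} [AddCommMonoid M] [TopologicalSpace M] {f : ℝ → M}
    (hf : ∀ u, 1 ≤ |u| → f u = 0) (t : ℝ) :
    ∑' n : ℤ, f (t + n) = f (Int.fract t) + f (Int.fract t - 1) := by
  have h_shift : ∑' n : ℤ, f (t + n) = ∑' n : ℤ, f (Int.fract t + n) := by
    rw [← (Equiv.subRight ⌊t⌋).tsum_eq]
    refine tsum_congr fun n => congrArg f ?_
    simp only [Equiv.subRight_apply, Int.cast_sub, Int.fract]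
    ring
  rw [h_shift, tsum_eq_sum (s := {0, -1}), Finset.sum_pair (by decide)]
  · simp [sub_eq_add_neg]
  intro n hn
  simp only [Finset.mem_insert, Finset.mem_singleton, not_or] at hn
  refine hf _ (le_abs.mpr ?_)
  rcases lt_or_gt_of_ne hn.1 with h_neg | h_pos
  · have : (n : ℝ) ≤ -2 := by exact_mod_cast (by omega : n ≤ -2)
    right; linarith [Int.fract_lt_one t]
  · have : (1 : ℝ) ≤ n := by exact_mod_cast h_pos
    left; linarith [Int.fract_nonneg t]

lemma tsum_posPart_one_sub_abs_sq (t : ℝ) :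
    ∑' n : ℤ, ENNReal.ofReal ((1 - |t + n|)⁺ ^ 2) =
      ENNReal.ofReal ((1 - Int.fract t) ^ 2 + Int.fract t ^ 2) := by
  have hs := Int.fract_nonneg t
  have hs1 := Int.fract_lt_one t
  rw [tsum_int_eq_fract (f := fun u => ENNReal.ofReal ((1 - |u|)⁺ ^ 2))
      (fun u hu => by simp [posPart_eq_zero.mpr (sub_nonpos.mpr hu)]),
    ← ENNReal.ofReal_add (sq_nonneg _) (sq_nonneg _), abs_of_nonneg hs,
    abs_of_nonpos (by linarith), posPart_of_nonneg (by linarith), posPart_of_nonneg (by linarith)]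
  ring_nf

lemma one_sub_fract_sq_add_fract_sq_le (t : ℝ) :
    (1 - Int.fract t) ^ 2 + Int.fract t ^ 2 ≤ (1 - |t|)⁺ ^ 2 + t ^ 2 := by
  rcases le_or_gt 1 |t| with ht | ht
  · have ht_sq : 1 ≤ t ^ 2 := by rwa [one_le_sq_iff_one_le_abs]
    nlinarith [sq_nonneg (1 - |t|)⁺, Int.fract_nonneg t, Int.fract_lt_one t]
  rw [posPart_of_nonneg (by linarith)]
  rcases le_or_gt 0 t with h_nonneg | h_neg
  · rw [abs_of_nonneg h_nonneg] at ht ⊢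
    rw [Int.fract_eq_self.mpr ⟨h_nonneg, ht⟩]
  · rw [abs_of_neg h_neg] at ht ⊢
    rw [← Int.fract_add_one, Int.fract_eq_self.mpr ⟨by linarith, by linarith⟩]
    linarith

lemma tsum_ne_zero_posPart_one_sub_abs_sq_le (t : ℝ) :
    ∑' n : {n : ℤ // n ≠ 0}, ENNReal.ofReal ((1 - |t + (n : ℤ)|)⁺ ^ 2) ≤
      ENNReal.ofReal (t ^ 2) := by
  refine (ENNReal.add_le_add_iff_left (a := ENNReal.ofReal ((1 - |t|)⁺ ^ 2))
    ENNReal.ofReal_ne_top).mp ?_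
  rw [← ENNReal.ofReal_add (sq_nonneg _) (sq_nonneg _)]
  refine le_of_eq_of_le ?_ (ENNReal.ofReal_le_ofReal (one_sub_fract_sq_add_fract_sq_le t))
  rw [← tsum_posPart_one_sub_abs_sq, ← add_tsum_ne_eq_tsum _ (0 : ℤ), Int.cast_zero, add_zero]

/-- The best constant `c` in `(1 - √(t² + r²))⁺ ≤ c * (1 - r)⁺` for all `r`; it is the cosine of
`2 arctan t`, cut off at `0`. -/
noncomputable def sliceFactor (t : ℝ) : ℝ := ((1 - t ^ 2) / (1 + t ^ 2))⁺

lemma sliceFactor_nonneg (t : ℝ) : 0 ≤ sliceFactor t := posPart_nonneg _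

lemma sliceFactor_of_abs_le_one {t : ℝ} (ht : |t| ≤ 1) :
    sliceFactor t = (1 - t ^ 2) / (1 + t ^ 2) :=
  posPart_of_nonneg (div_nonneg (sub_nonneg.mpr ((sq_le_one_iff_abs_le_one t).mpr ht))
    (by positivity))

lemma sliceFactor_of_one_le_abs {t : ℝ} (ht : 1 ≤ |t|) : sliceFactor t = 0 :=
  posPart_eq_zero.mpr (div_nonpos_of_nonpos_of_nonneg
    (sub_nonpos.mpr ((one_le_sq_iff_one_le_abs t).mpr ht)) (by positivity))

-- Cauchy–Schwarz for the vectors `(2t, 1 - t²)`, of norm `1 + t²`, and `(t, r)`.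
lemma two_mul_sq_add_le_mul_sqrt (t r : ℝ) :
    2 * t ^ 2 + (1 - t ^ 2) * r ≤ (1 + t ^ 2) * √(t ^ 2 + r ^ 2) := by
  rw [← sqrt_sq (by positivity : 0 ≤ 1 + t ^ 2), ← sqrt_mul (by positivity)]
  apply le_sqrt_of_sq_le
  linarith [sq_nonneg (2 * t * r - (1 - t ^ 2) * t)]

lemma posPart_one_sub_sqrt_le_sliceFactor_mul (t r : ℝ) :
    (1 - √(t ^ 2 + r ^ 2))⁺ ≤ sliceFactor t * (1 - r)⁺ := by
  rcases le_or_gt 1 √(t ^ 2 + r ^ 2) with h_out | h_in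
  · rw [posPart_eq_zero.mpr (sub_nonpos.mpr h_out)]
    exact mul_nonneg (sliceFactor_nonneg t) (posPart_nonneg _)
  have ht : |t| ≤ √(t ^ 2 + r ^ 2) := abs_le_sqrt (by linarith [sq_nonneg r])
  have hr : |r| ≤ √(t ^ 2 + r ^ 2) := abs_le_sqrt (by linarith [sq_nonneg t])
  rw [posPart_of_nonneg (by linarith), posPart_of_nonneg (by linarith [le_abs_self r]),
    sliceFactor_of_abs_le_one (by linarith), div_mul_eq_mul_div, le_div_iff₀ (by positivity)]
  linarith [two_mul_sq_add_le_mul_sqrt t r]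

-- `sliceFactor (s - 1)` is at most the sine of `2 arctan s`, whose cosine is `sliceFactor s`.
lemma sliceFactor_sq_add_sq_le_one {s : ℝ} (h0 : 0 ≤ s) (h1 : s ≤ 1) :
    sliceFactor s ^ 2 + sliceFactor (s - 1) ^ 2 ≤ 1 := by
  have h_sin : sliceFactor (s - 1) ≤ 2 * s / (1 + s ^ 2) := by
    rw [sliceFactor_of_abs_le_one (abs_le.mpr ⟨by linarith, by linarith⟩),
      div_le_div_iff₀ (by positivity) (by positivity)]
    linarith [(by positivity : 0 ≤ s * ((1 - s) ^ 2 * (s + 2)))]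
  calc sliceFactor s ^ 2 + sliceFactor (s - 1) ^ 2
      ≤ ((1 - s ^ 2) / (1 + s ^ 2)) ^ 2 + (2 * s / (1 + s ^ 2)) ^ 2 := by
        rw [sliceFactor_of_abs_le_one (abs_le.mpr ⟨by linarith, h1⟩)]
        gcongr
        exact sliceFactor_nonneg _
    _ = 1 := by field_simp; ring

lemma tsum_sliceFactor_sq_le_one (t : ℝ) :
    ∑' n : ℤ, ENNReal.ofReal (sliceFactor (t + n) ^ 2) ≤ 1 := by
  rw [tsum_int_eq_fract (f := fun u => ENNReal.ofReal (sliceFactor u ^ 2))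
      (fun u hu => by simp [sliceFactor_of_one_le_abs hu]),
    ← ENNReal.ofReal_add (sq_nonneg _) (sq_nonneg _), ENNReal.ofReal_le_one]
  exact sliceFactor_sq_add_sq_le_one (Int.fract_nonneg t) (Int.fract_lt_one t).le

section Cone

variable {ι : Type*} [Fintype ι]

/-- The cone `(1 - ‖x‖)⁺` for the Euclidean norm (`ι → ℝ` itself carries the sup norm): the optimal
kernel in the coordinates `x i = h i * ω i`. -/
noncomputable def coneKernel (x : ι → ℝ) : ℝ := (1 - √(∑ i, x i ^ 2))⁺

lemma coneKernel_nonneg (x : ι → ℝ) : 0 ≤ coneKernel x := posPart_nonneg _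

lemma coneKernel_le_posPart_one_sub_abs (x : ι → ℝ) (i : ι) : coneKernel x ≤ (1 - |x i|)⁺ :=
  posPart_mono (sub_le_sub_left (abs_le_sqrt
    (Finset.single_le_sum (fun j _ => sq_nonneg (x j)) (Finset.mem_univ i))) 1)

lemma coneKernel_option_le (x : Option ι → ℝ) :
    coneKernel x ≤ sliceFactor (x none) * coneKernel (fun i => x (some i)) := by
  have h := posPart_one_sub_sqrt_le_sliceFactor_mul (x none) √(∑ i, x (some i) ^ 2)
  rwa [sq_sqrt (by positivity), ← Fintype.sum_option fun i => x i ^ 2] at h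

lemma coneKernel_le_one (x : ι → ℝ) : coneKernel x ≤ 1 :=
  sup_le (sub_le_self 1 (sqrt_nonneg _)) zero_le_one

lemma one_sub_coneKernel_sq_le (x : ι → ℝ) : (1 - coneKernel x) ^ 2 ≤ ∑ i, x i ^ 2 := by
  rw [← sq_sqrt (by positivity : 0 ≤ ∑ i, x i ^ 2)]
  exact pow_le_pow_left₀ (sub_nonneg.mpr (coneKernel_le_one x)) (sub_le_comm.mp (le_posPart _)) 2

lemma coneKernel_comp_equiv {κ : Type*} [Fintype κ] (e : κ ≃ ι) (x : ι → ℝ) :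
    coneKernel (x ∘ e) = coneKernel x :=
  congrArg (fun s => (1 - √s)⁺) (e.sum_comp fun i => x i ^ 2)

/-- The aliasing part of the interpolation error of `coneKernel`, in the coordinates
`x i = h i * ω i` in which the dual lattice is `ι → ℤ`. -/
noncomputable def coneAliasing (x : ι → ℝ) : ℝ≥0∞ :=
  ∑' k : {k : ι → ℤ // k ≠ 0}, ENNReal.ofReal (coneKernel (fun i => x i + k.1 i) ^ 2)

lemma coneAliasing_comp_equiv {κ : Type*} [Fintype κ] (e : κ ≃ ι) (x : ι → ℝ) :
    coneAliasing (x ∘ e) = coneAliasing x := by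
  let E : (ι → ℤ) ≃ (κ → ℤ) := e.symm.arrowCongr (Equiv.refl ℤ)
  rw [coneAliasing, ← (E.subtypeEquiv fun k => (E.injective.ne_iff' (y := 0) rfl).symm).tsum_eq]
  refine tsum_congr fun k => ?_
  rw [← coneKernel_comp_equiv e]
  rfl

lemma coneAliasing_option_le (x : Option ι → ℝ) :
    coneAliasing x ≤ ENNReal.ofReal (x none ^ 2) + coneAliasing (x ∘ some) := by
  let cons : ℤ × (ι → ℤ) ≃ (Option ι → ℤ) :=
    (Equiv.piOptionEquivProd (β := fun _ : Option ι => ℤ)).symm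
  have h_cons (p : ℤ × (ι → ℤ)) : p ≠ 0 ↔ cons p ≠ 0 :=
    (cons.injective.ne_iff' (funext (by rintro (_ | _) <;> rfl))).symm
  let f (p : ℤ × (ι → ℤ)) : ℝ≥0∞ := ENNReal.ofReal (coneKernel (fun i => x i + cons p i) ^ 2)
  have h_axis (n : ℤ) : f (n, 0) ≤ ENNReal.ofReal ((1 - |x none + n|)⁺ ^ 2) :=
    ENNReal.ofReal_le_ofReal
      (pow_le_pow_left₀ (coneKernel_nonneg _) (coneKernel_le_posPart_one_sub_abs _ none) 2)
  have h_slice (n : ℤ) (k : ι → ℤ) : f (n, k) ≤ ENNReal.ofReal (sliceFactor (x none + n) ^ 2) *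
      ENNReal.ofReal (coneKernel (fun i => x (some i) + k i) ^ 2) := by
    rw [← ENNReal.ofReal_mul (sq_nonneg _), ← mul_pow]
    exact ENNReal.ofReal_le_ofReal
      (pow_le_pow_left₀ (coneKernel_nonneg _) (coneKernel_option_le _) 2)
  calc coneAliasing x
      = ∑' p : {p : ℤ × (ι → ℤ) // p ≠ 0}, f p :=
        ((cons.subtypeEquiv h_cons).tsum_eq _).symm
    _ = ∑' n : {n : ℤ // n ≠ 0}, f (n, 0) + ∑' k : {k : ι → ℤ // k ≠ 0}, ∑' n : ℤ, f (n, k) :=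
        tsum_prod_ne_zero f
    _ ≤ ∑' n : {n : ℤ // n ≠ 0}, ENNReal.ofReal ((1 - |x none + (n : ℤ)|)⁺ ^ 2) +
          (∑' n : ℤ, ENNReal.ofReal (sliceFactor (x none + n) ^ 2)) * coneAliasing (x ∘ some) := by
        rw [coneAliasing, ← ENNReal.tsum_mul_left]
        simp only [← ENNReal.tsum_mul_right]
        gcongr with n k n
        · exact h_axis n
        · exact h_slice n k
    _ ≤ ENNReal.ofReal (x none ^ 2) + 1 * coneAliasing (x ∘ some) := by
        gcongr
        · exact tsum_ne_zero_posPart_one_sub_abs_sq_le _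
        · exact tsum_sliceFactor_sq_le_one _
    _ = ENNReal.ofReal (x none ^ 2) + coneAliasing (x ∘ some) := by rw [one_mul]

theorem coneAliasing_le (x : ι → ℝ) : coneAliasing x ≤ ENNReal.ofReal (∑ i, x i ^ 2) := by
  refine Fintype.induction_empty_option
    (P := fun ι _ => ∀ x : ι → ℝ, coneAliasing x ≤ ENNReal.ofReal (∑ i, x i ^ 2)) ?_ ?_ ?_ ι x
  · intro κ ι _ e ih x
    let := Fintype.ofEquiv ι e.symm
    simpa only [coneAliasing_comp_equiv, Function.comp_apply, e.sum_comp fun i => x i ^ 2]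
      using ih (x ∘ e)
  · intro x
    exact (ENNReal.tsum_eq_zero.mpr fun k => (k.2 (Subsingleton.elim _ _)).elim).trans_le zero_le
  · intro ι _ ih x
    rw [Fintype.sum_option, ENNReal.ofReal_add (by positivity) (by positivity)]
    exact (coneAliasing_option_le x).trans (add_le_add_right (ih _) _)

/-- The integrand of `Phi` without the spectral density: the interpolation error of the kernel `K`
at the frequency `ω`, for the sampling steps `h`. -/
noncomputable def interpolationError (h : ι → ℝ) (K : (ι → ℝ) → ℝ) (ω : ι → ℝ) : ℝ≥0∞ :=
  ENNReal.ofReal ((1 - K ω) ^ 2) +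
    ∑' k : {k : ι → ℤ // k ≠ 0}, ENNReal.ofReal (K (ω + fun i => (k.1 i : ℝ) / h i) ^ 2)

lemma interpolationError_coneKernel_le {h : ι → ℝ} (hh : ∀ i, h i ≠ 0) (ω : ι → ℝ) :
    interpolationError h (fun ω => coneKernel (h * ω)) ω ≤
      ENNReal.ofReal (2 * ∑ i, (h i * ω i) ^ 2) := by
  have h_shift (k : ι → ℤ) :
      h * (ω + fun i => (k i : ℝ) / h i) = fun i => (h * ω) i + k i := by
    ext i
    simp [mul_add, mul_div_cancel₀ _ (hh i)]
  simp only [interpolationError, h_shift]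
  rw [two_mul, ENNReal.ofReal_add (by positivity) (by positivity)]
  exact add_le_add (ENNReal.ofReal_le_ofReal (one_sub_coneKernel_sq_le _)) (coneAliasing_le _)

lemma sum_mul_sq_le_iSup_mul (h : ι → ℝ) {lam : ι → ℝ} (hlam : ∀ i, lam i ≠ 0) (ω : ι → ℝ) :
    ∑ i, (h i * ω i) ^ 2 ≤ (⨆ i, (h i / lam i) ^ 2) * ∑ i, lam i ^ 2 * ω i ^ 2 := by
  rw [Finset.mul_sum]
  gcongr with i
  calc (h i * ω i) ^ 2
      = (h i / lam i) ^ 2 * (lam i ^ 2 * ω i ^ 2) := by field [hlam i]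
    _ ≤ (⨆ i, (h i / lam i) ^ 2) * (lam i ^ 2 * ω i ^ 2) := by
        gcongr
        exact le_ciSup (f := fun i => (h i / lam i) ^ 2) (Set.finite_range _).bddAbove i

theorem lintegral_interpolationError_coneKernel_le {h lam : ι → ℝ} (hh : ∀ i, h i ≠ 0)
    (hlam : ∀ i, lam i ≠ 0) (μ : Measure (ι → ℝ)) :
    ∫⁻ ω, interpolationError h (fun ω => coneKernel (h * ω)) ω ∂μ ≤
      ENNReal.ofReal (2 * ⨆ i, (h i / lam i) ^ 2) *
        ∫⁻ ω, ENNReal.ofReal (∑ i, lam i ^ 2 * ω i ^ 2) ∂μ := by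
  rw [← lintegral_const_mul' _ _ ENNReal.ofReal_ne_top]
  refine lintegral_mono fun ω => (interpolationError_coneKernel_le hh ω).trans ?_
  rw [← ENNReal.ofReal_mul' (by positivity), mul_assoc]
  gcongr
  exact sum_mul_sq_le_iSup_mul h hlam ω

lemma coneKernel_mul_eq_ite (h ω : ι → ℝ) :
    coneKernel (h * ω) =
      if ∑ i, ω i ^ 2 * h i ^ 2 ≤ 1 then 1 - √(∑ i, ω i ^ 2 * h i ^ 2) else 0 := by
  simp only [coneKernel, Pi.mul_apply, mul_pow, mul_comm (h _ ^ 2)]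
  split_ifs with h_le
  · exact posPart_of_nonneg (sub_nonneg.mpr (sqrt_le_one.mpr h_le))
  · exact posPart_eq_zero.mpr (sub_nonpos.mpr (one_le_sqrt.mpr (not_le.mp h_le).le))

theorem optimal_kernel_upper_bound_general (h lam : ι → ℝ) (hh : ∀ i, h i ≠ 0)
    (hlam : ∀ i, lam i ≠ 0) (L : ℝ) (hL : 0 ≤ L) (Kstar : (ι → ℝ) → ℝ)
    (hKstar : ∀ ω : ι → ℝ, Kstar ω =
      if ∑ i, ω i ^ 2 * h i ^ 2 ≤ 1 then 1 - √(∑ i, ω i ^ 2 * h i ^ 2) else 0)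
    (μ : Measure (ι → ℝ))
    (hμ : ENNReal.ofReal ((2 * π) ^ 2) * ∫⁻ ω, ENNReal.ofReal (∑ i, lam i ^ 2 * ω i ^ 2) ∂μ ≤
      ENNReal.ofReal L) :
    ∫⁻ ω, interpolationError h Kstar ω ∂μ ≤
      ENNReal.ofReal (L / (2 * π ^ 2) * ⨆ i, (h i / lam i) ^ 2) := by
  obtain rfl : Kstar = fun ω => coneKernel (h * ω) :=
    funext fun ω => (hKstar ω).trans (coneKernel_mul_eq_ite h ω).symm
  calc ∫⁻ ω, interpolationError h (fun ω => coneKernel (h * ω)) ω ∂μ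
      ≤ ENNReal.ofReal (2 * ⨆ i, (h i / lam i) ^ 2) *
          ∫⁻ ω, ENNReal.ofReal (∑ i, lam i ^ 2 * ω i ^ 2) ∂μ :=
        lintegral_interpolationError_coneKernel_le hh hlam μ
    _ ≤ ENNReal.ofReal (2 * ⨆ i, (h i / lam i) ^ 2) * ENNReal.ofReal (L / (2 * π) ^ 2) := by
        gcongr
        rwa [ENNReal.ofReal_div_of_pos (by positivity),
          ENNReal.le_div_iff_mul_le (by simp [pi_ne_zero]) (by simp), mul_comm]
    _ = ENNReal.ofReal (L / (2 * π ^ 2) * ⨆ i, (h i / lam i) ^ 2) := by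
        rw [mul_comm, ← ENNReal.ofReal_mul (by positivity)]
        congr 1
        field

end Cone

lemma Phi_eq_lintegral_withDensity {d : ℕ} {F : (Fin d → ℝ) → ℝ} (hF : Measurable F)
    (h : Fin d → ℝ) (K : (Fin d → ℝ) → ℝ) :
    Phi d h F K =
      ∫⁻ ω, interpolationError h K ω ∂volume.withDensity fun ω => ENNReal.ofReal (F ω) :=
  (lintegral_withDensity_eq_lintegral_mul_non_measurable volume hF.ennreal_ofReal
    (ae_of_all _ fun _ => ENNReal.ofReal_lt_top) _).symm

lemma secondMoment_withDensity_le_of_mem_SpecClass {d : ℕ} {L : ℝ} {lam : Fin d → ℝ}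
    {F : (Fin d → ℝ) → ℝ} (hF : F ∈ SpecClass d L lam) :
    ENNReal.ofReal ((2 * π) ^ 2) * ∫⁻ ω, ENNReal.ofReal (∑ i, lam i ^ 2 * ω i ^ 2)
      ∂volume.withDensity (fun ω => ENNReal.ofReal (F ω)) ≤ ENNReal.ofReal L := by
  obtain ⟨hF_meas, -, hF_nonneg, hFL⟩ := hF
  rw [lintegral_withDensity_eq_lintegral_mul_non_measurable _ hF_meas.ennreal_ofReal
    (ae_of_all _ fun _ => ENNReal.ofReal_lt_top)]
  simpa only [Pi.mul_apply, ← ENNReal.ofReal_mul (hF_nonneg _)] using hFL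

/-- With the minimax-optimal kernel
`K̂*(ω) = 1 − √(∑ᵢ ωᵢ² hᵢ²)` for `∑ᵢ ωᵢ² hᵢ² ≤ 1` and `0` otherwise,
the interpolation error is at most `(L/(2π²)) · maxᵢ (hᵢ/λᵢ)²` for every
spectral density `F` in the smoothness class `𝓕(L, λ)`. -/
theorem optimal_kernel_upper_bound (d : ℕ) (hd : 1 ≤ d) (h lam : Fin d → ℝ)
    (hh : ∀ i, 0 < h i) (hlam : ∀ i, 0 < lam i) (L : ℝ) (hL : 0 < L)
    (Kstar : (Fin d → ℝ) → ℝ)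
    (hKstar : ∀ ω : Fin d → ℝ, Kstar ω =
      if (∑ i, (ω i) ^ 2 * (h i) ^ 2) ≤ 1
        then 1 - Real.sqrt (∑ i, (ω i) ^ 2 * (h i) ^ 2) else 0) :
    ∀ F ∈ SpecClass d L lam,
      Phi d h F Kstar ≤ ENNReal.ofReal (L / (2 * π ^ 2) * ⨆ i : Fin d, (h i / lam i) ^ 2) := by
  intro F hF
  rw [Phi_eq_lintegral_withDensity hF.1]
  exact optimal_kernel_upper_bound_general h lam (fun i => (hh i).ne') (fun i => (hlam i).ne') L
    hL.le Kstar hKstar _ (secondMoment_withDensity_le_of_mem_SpecClass hF)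
end

section
/- Let d ≥ 1, let h_1,…,h_d > 0, λ_1,…,λ_d > 0 and L > 0. Then for every measurable kernel K̂ : ℝ^d → ℝ, the supremum over F ∈ 𝓕(L, λ) of Φ_H(F, K̂) is at least (L / (2π²)) · max_{i ∈ {1,…,d}} (h_i / λ_i)². -/
open MeasureTheory Real

/-!
Sampling cannot tell a frequency `ω` from its alias `ω - v`, where `v` is a nonzero point of the
dual lattice `H⁻¹ℤ^d`. With `a = K ω` and `b = K (ω - v)`, the pointwise errors at the two
frequencies add up to at least `(1 - a)² + b² + (1 - b)² + a² ≥ 1`. So if half of the spectral mass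
is a translate by `-v` of the other half, at least half of the total mass is lost, whatever `K` is.
The smoothness constraint allows the most mass when the two halves concentrate near `v / 2` and
`-v / 2`, and the shortest vectors `v` along the coordinate axes give the bound.
-/

/-- The density `φ` together with its alias, the copy of `φ` translated by `-v`. For `v` in the dual
lattice, this is the worst-case spectral density used against a kernel. -/
def addAlias {E : Type*} [Add E] (v : E) (φ : E → ℝ) (ω : E) : ℝ :=
  φ ω + φ (ω + v)

section Measure

variable {E : Type*} [MeasurableSpace E] {μ : Measure E}

lemma lintegral_ofReal_addAlias_mul [AddGroup E] [MeasurableAdd E] [μ.IsAddRightInvariant]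
    {φ : E → ℝ} {g : E → ENNReal} (hφ : AEMeasurable φ μ) (hφ₀ : ∀ ω, 0 ≤ φ ω)
    (hg : AEMeasurable g μ) (v : E) :
    ∫⁻ ω, ENNReal.ofReal (addAlias v φ ω) * g ω ∂μ =
      ∫⁻ ω, ENNReal.ofReal (φ ω) * (g ω + g (ω - v)) ∂μ := by
  have hφg : AEMeasurable (fun ω => ENNReal.ofReal (φ ω) * g ω) μ := hφ.ennreal_ofReal.mul hg
  have translate : ∫⁻ ω, ENNReal.ofReal (φ (ω + v)) * g ω ∂μ =
      ∫⁻ ω, ENNReal.ofReal (φ ω) * g (ω - v) ∂μ := by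
    simpa using lintegral_add_right_eq_self (μ := μ)
      (fun ω => ENNReal.ofReal (φ ω) * g (ω - v)) v
  simp only [addAlias, ENNReal.ofReal_add (hφ₀ _) (hφ₀ _), add_mul, mul_add]
  rw [lintegral_add_left' hφg, lintegral_add_left' hφg, translate]

lemma exists_density_support_subset [TopologicalSpace E] [OpensMeasurableSpace E]
    [μ.IsOpenPosMeasure] [IsLocallyFiniteMeasure μ] {p : E} {s : Set E} (hs : s ∈ nhds p)
    {M : ℝ} (hM : 0 ≤ M) :
    ∃ φ : E → ℝ, Measurable φ ∧ Integrable φ μ ∧ (∀ ω, 0 ≤ φ ω) ∧ Function.support φ ⊆ s ∧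
      ∫ ω, φ ω ∂μ = M := by
  obtain ⟨t, ht, htop⟩ := μ.finiteAt_nhds p
  obtain ⟨U, hUst, hU, hpU⟩ := mem_nhds_iff.1 (Filter.inter_mem hs ht)
  have hU_top : μ U ≠ ⊤ := ((measure_mono (hUst.trans Set.inter_subset_right)).trans_lt htop).ne
  have hU_pos : 0 < μ.real U :=
    ENNReal.toReal_pos (hU.measure_pos μ ⟨p, hpU⟩).ne' hU_top
  refine ⟨U.indicator fun _ => M / μ.real U, measurable_const.indicator hU.measurableSet,
    (integrable_indicator_iff hU.measurableSet).2 (integrableOn_const hU_top),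
    fun ω => Set.indicator_nonneg (fun _ _ => by positivity) ω,
    Set.support_indicator_subset.trans (hUst.trans Set.inter_subset_left), ?_⟩
  rw [integral_indicator_const _ hU.measurableSet, smul_eq_mul, mul_div_cancel₀ _ hU_pos.ne']

end Measure

section Lattice

variable {ι : Type*}

/-- The point `H⁻¹n` of the dual lattice of the sampling grid, for `H = diag h`. -/
noncomputable def dualLatticePoint (h : ι → ℝ) (n : ι → ℤ) : ι → ℝ :=
  fun i => n i / h i

lemma dualLatticePoint_neg (h : ι → ℝ) (n : ι → ℤ) :
    dualLatticePoint h (-n) = -dualLatticePoint h n := by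
  ext i
  simp [dualLatticePoint, neg_div]

/-- The interpolation error of the kernel `K` at the frequency `ω`: the integrand of `Phi` without
the spectral density. -/
noncomputable def interpError (h : ι → ℝ) (K : (ι → ℝ) → ℝ) (ω : ι → ℝ) : ENNReal :=
  ENNReal.ofReal ((1 - K ω) ^ 2) +
    ∑' k : {k : ι → ℤ // k ≠ 0}, ENNReal.ofReal (K (ω + dualLatticePoint h k) ^ 2)

lemma measurable_interpError [Finite ι] (h : ι → ℝ) {K : (ι → ℝ) → ℝ} (hK : Measurable K) :
    Measurable (interpError h K) := by
  have measurable_alias (k : {k : ι → ℤ // k ≠ 0}) :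
      Measurable fun ω => ENNReal.ofReal (K (ω + dualLatticePoint h k) ^ 2) := by
    fun_prop
  exact Measurable.add (by fun_prop) (Measurable.tsum measurable_alias)

lemma ofReal_le_interpError (h : ι → ℝ) (K : (ι → ℝ) → ℝ) {n : ι → ℤ} (hn : n ≠ 0) (ω : ι → ℝ) :
    ENNReal.ofReal ((1 - K ω) ^ 2 + K (ω + dualLatticePoint h n) ^ 2) ≤ interpError h K ω := by
  rw [ENNReal.ofReal_add (sq_nonneg _) (sq_nonneg _), interpError]
  gcongr
  exact ENNReal.le_tsum (f := fun k : {k : ι → ℤ // k ≠ 0} =>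
    ENNReal.ofReal (K (ω + dualLatticePoint h k) ^ 2)) ⟨n, hn⟩

lemma one_le_interpError_add_interpError_sub (h : ι → ℝ) (K : (ι → ℝ) → ℝ) {n : ι → ℤ}
    (hn : n ≠ 0) (ω : ι → ℝ) :
    1 ≤ interpError h K ω + interpError h K (ω - dualLatticePoint h n) := by
  set v := dualLatticePoint h n with hv
  have error_at : ENNReal.ofReal ((1 - K ω) ^ 2 + K (ω - v) ^ 2) ≤ interpError h K ω := by
    simpa only [dualLatticePoint_neg, ← sub_eq_add_neg] using
      ofReal_le_interpError h K (neg_ne_zero.2 hn) ω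
  have error_at_alias :
      ENNReal.ofReal ((1 - K (ω - v)) ^ 2 + K ω ^ 2) ≤ interpError h K (ω - v) := by
    simpa only [← hv, sub_add_cancel] using ofReal_le_interpError h K hn (ω - v)
  refine le_trans ?_ (add_le_add error_at error_at_alias)
  rw [← ENNReal.ofReal_add (by positivity) (by positivity), ENNReal.one_le_ofReal]
  nlinarith [sq_nonneg (2 * K ω - 1), sq_nonneg (2 * K (ω - v) - 1)]

/-- The quadratic form `∑ᵢ λᵢ² ωᵢ²` whose integral against a density is bounded in `SpecClass`. -/
def weightedSq [Fintype ι] (lam ω : ι → ℝ) : ℝ :=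
  ∑ i, lam i ^ 2 * ω i ^ 2

variable [Fintype ι]

lemma weightedSq_nonneg (lam ω : ι → ℝ) : 0 ≤ weightedSq lam ω :=
  Finset.sum_nonneg fun _ _ => by positivity

@[fun_prop]
lemma continuous_weightedSq (lam : ι → ℝ) : Continuous (weightedSq lam) := by
  unfold weightedSq
  fun_prop

lemma weightedSq_smul (lam : ι → ℝ) (c : ℝ) (ω : ι → ℝ) :
    weightedSq lam (c • ω) = c ^ 2 * weightedSq lam ω := by
  simp only [weightedSq, Pi.smul_apply, smul_eq_mul, mul_pow, Finset.mul_sum, mul_left_comm]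

lemma weightedSq_dualLatticePoint_single [DecidableEq ι] (h lam : ι → ℝ) (i : ι) :
    weightedSq lam (dualLatticePoint h (Pi.single i 1)) = (lam i / h i) ^ 2 := by
  rw [weightedSq, Finset.sum_eq_single i]
  · simp [dualLatticePoint, div_eq_mul_inv, mul_pow]
  · intro j _ hj
    simp [dualLatticePoint, hj]
  · simp

end Lattice

variable {d : ℕ}

lemma ofReal_integral_le_phi_addAlias (h : Fin d → ℝ) {K φ : (Fin d → ℝ) → ℝ} (hK : Measurable K)
    (hφ : Integrable φ) (hφ₀ : ∀ ω, 0 ≤ φ ω) {n : Fin d → ℤ} (hn : n ≠ 0) :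
    ENNReal.ofReal (∫ ω, φ ω) ≤ Phi d h (addAlias (dualLatticePoint h n) φ) K := by
  set v := dualLatticePoint h n
  calc ENNReal.ofReal (∫ ω, φ ω)
      = ∫⁻ ω, ENNReal.ofReal (φ ω) * 1 := by
        simpa using ofReal_integral_eq_lintegral_ofReal hφ (ae_of_all _ hφ₀)
    _ ≤ ∫⁻ ω, ENNReal.ofReal (φ ω) * (interpError h K ω + interpError h K (ω - v)) := by
        gcongr with ω
        exact one_le_interpError_add_interpError_sub h K hn ω
    _ = ∫⁻ ω, ENNReal.ofReal (addAlias v φ ω) * interpError h K ω :=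
        (lintegral_ofReal_addAlias_mul hφ.aemeasurable hφ₀
          (measurable_interpError h hK).aemeasurable v).symm
    _ = Phi d h (addAlias v φ) K := rfl

lemma addAlias_mem_specClass {L r : ℝ} {lam v : Fin d → ℝ} {φ : (Fin d → ℝ) → ℝ}
    (hφm : Measurable φ) (hφ : Integrable φ) (hφ₀ : ∀ ω, 0 ≤ φ ω)
    (hr : ∀ ω ∈ Function.support φ, weightedSq lam ω + weightedSq lam (ω - v) ≤ r)
    (hL : (2 * π) ^ 2 * ((∫ ω, φ ω) * r) ≤ L) :
    addAlias v φ ∈ SpecClass d L lam := by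
  have alias_nonneg ω : 0 ≤ addAlias v φ ω := add_nonneg (hφ₀ _) (hφ₀ _)
  refine ⟨hφm.add (hφm.comp (measurable_add_const v)), hφ.add (hφ.comp_add_right v),
    alias_nonneg, ?_⟩
  have weight_le ω : ENNReal.ofReal (φ ω) *
      (ENNReal.ofReal (weightedSq lam ω) + ENNReal.ofReal (weightedSq lam (ω - v))) ≤
        ENNReal.ofReal (φ ω) * ENNReal.ofReal r := by
    by_cases hω : φ ω = 0
    · simp [hω]
    · rw [← ENNReal.ofReal_add (weightedSq_nonneg _ _) (weightedSq_nonneg _ _)]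
      gcongr
      exact hr ω hω
  calc ENNReal.ofReal ((2 * π) ^ 2) *
        ∫⁻ ω, ENNReal.ofReal (addAlias v φ ω * weightedSq lam ω)
      = ENNReal.ofReal ((2 * π) ^ 2) * ∫⁻ ω, ENNReal.ofReal (φ ω) *
          (ENNReal.ofReal (weightedSq lam ω) + ENNReal.ofReal (weightedSq lam (ω - v))) := by
        simp only [ENNReal.ofReal_mul (alias_nonneg _)]
        rw [lintegral_ofReal_addAlias_mul hφ.aemeasurable hφ₀
          (by fun_prop : AEMeasurable fun ω => ENNReal.ofReal (weightedSq lam ω))]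
    _ ≤ ENNReal.ofReal ((2 * π) ^ 2) * ∫⁻ ω, ENNReal.ofReal (φ ω) * ENNReal.ofReal r := by
        gcongr _ * ?_
        exact lintegral_mono weight_le
    _ = ENNReal.ofReal ((2 * π) ^ 2 * ((∫ ω, φ ω) * r)) := by
        rw [lintegral_mul_const' _ _ ENNReal.ofReal_ne_top,
          ← ofReal_integral_eq_lintegral_ofReal hφ (ae_of_all _ hφ₀),
          ← ENNReal.ofReal_mul (integral_nonneg hφ₀), ← ENNReal.ofReal_mul (by positivity)]
    _ ≤ ENNReal.ofReal L := ENNReal.ofReal_le_ofReal hL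

lemma ofReal_le_iSup_phi_of_weightedSq_lt {h lam p : Fin d → ℝ} {L M : ℝ}
    {K : (Fin d → ℝ) → ℝ} (hK : Measurable K) {n : Fin d → ℤ} (hn : n ≠ 0) (hM : 0 < M)
    (hL : weightedSq lam p + weightedSq lam (p - dualLatticePoint h n) < L / ((2 * π) ^ 2 * M)) :
    ENNReal.ofReal M ≤ ⨆ F ∈ SpecClass d L lam, Phi d h F K := by
  set v := dualLatticePoint h n
  have hcont : Continuous fun ω => weightedSq lam ω + weightedSq lam (ω - v) := by fun_prop
  obtain ⟨φ, hφm, hφ, hφ₀, hsupp, hmass⟩ := exists_density_support_subset (μ := volume)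
    (hcont.continuousAt.eventually_lt continuousAt_const hL) hM.le
  have hmem : addAlias v φ ∈ SpecClass d L lam := by
    refine addAlias_mem_specClass hφm hφ hφ₀ (fun ω hω => (hsupp hω).le) (le_of_eq ?_)
    rw [hmass]
    field_simp
  rw [← hmass]
  exact (ofReal_integral_le_phi_addAlias h hK hφ hφ₀ hn).trans
    (le_iSup₂ (f := fun F _ => Phi d h F K) _ hmem)

lemma ofReal_div_weightedSq_le_iSup_phi {h lam : Fin d → ℝ} {L : ℝ} {K : (Fin d → ℝ) → ℝ}
    (hK : Measurable K) {n : Fin d → ℤ} (hn : n ≠ 0)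
    (hpos : 0 < weightedSq lam (dualLatticePoint h n)) :
    ENNReal.ofReal (L / (2 * π ^ 2 * weightedSq lam (dualLatticePoint h n))) ≤
      ⨆ F ∈ SpecClass d L lam, Phi d h F K := by
  set v := dualLatticePoint h n
  refine le_of_forall_lt fun a ha => ?_
  obtain ⟨M, -, haM, hML⟩ := ENNReal.lt_iff_exists_real_btwn.1 ha
  have hM : 0 < M := ENNReal.ofReal_pos.1 (pos_of_gt haM)
  have hmid : weightedSq lam ((1 / 2 : ℝ) • v) + weightedSq lam ((1 / 2 : ℝ) • v - v) =
      weightedSq lam v / 2 := by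
    have : (1 / 2 : ℝ) • v - v = (-1 / 2 : ℝ) • v := by module
    rw [this, weightedSq_smul, weightedSq_smul]
    ring
  refine haM.trans_le
    (ofReal_le_iSup_phi_of_weightedSq_lt (p := (1 / 2 : ℝ) • v) hK hn hM ?_)
  rw [hmid, lt_div_iff₀ (by positivity)]
  have hlt : M * (2 * π ^ 2 * weightedSq lam v) < L :=
    (lt_div_iff₀ (by positivity)).1 (ENNReal.ofReal_lt_ofReal_iff'.1 hML).1
  linarith

/-- For every measurable kernel `K̂`, the worst-case interpolation error over the
smoothness class `𝓕(L, λ)` is at least `(L/(2π²)) · maxᵢ (hᵢ/λᵢ)²`. -/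
theorem minimax_lower_bound (d : ℕ) (hd : 1 ≤ d) (h lam : Fin d → ℝ)
    (hh : ∀ i, 0 < h i) (hlam : ∀ i, 0 < lam i) (L : ℝ) (hL : 0 < L)
    (K : (Fin d → ℝ) → ℝ) (hK : Measurable K) :
    ENNReal.ofReal (L / (2 * π ^ 2) * ⨆ i : Fin d, (h i / lam i) ^ 2)
      ≤ ⨆ F ∈ SpecClass d L lam, Phi d h F K := by
  have : Nonempty (Fin d) := ⟨⟨0, hd⟩⟩
  obtain ⟨i, hi⟩ := exists_eq_ciSup_of_finite (f := fun i : Fin d => (h i / lam i) ^ 2)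
  have hhi := hh i
  have hlami := hlam i
  have hweight := weightedSq_dualLatticePoint_single h lam i
  have hpos : 0 < weightedSq lam (dualLatticePoint h (Pi.single i 1)) := by
    rw [hweight]
    positivity
  calc ENNReal.ofReal (L / (2 * π ^ 2) * ⨆ i : Fin d, (h i / lam i) ^ 2)
      = ENNReal.ofReal (L / (2 * π ^ 2 * weightedSq lam (dualLatticePoint h (Pi.single i 1)))) := by
        rw [← hi, hweight, ← inv_div (lam i) (h i), inv_pow, ← div_eq_mul_inv, div_div]
    _ ≤ ⨆ F ∈ SpecClass d L lam, Phi d h F K :=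
        ofReal_div_weightedSq_le_iSup_phi hK (by simp) hpos
end

section
/- Let c ≥ 0 and ω ≥ 0 be real numbers such that c² + ω² ≤ 1 and c² + (1 − ω)² ≤ 1. Then (1 − √(c² + ω²))² + (1 − √(c² + (1 − ω)²))² ≤ (1 − c)². -/
/-!
In the triangle with vertices `(0, 0)`, `(1, 0)` and apex `(ω, c)`, let `a` and `b` be the lengths
of the sides from the apex to `(0, 0)` and `(1, 0)`. By symmetry we may assume `ω ≤ 1 / 2`. Since
`1 - ω ≤ b ≤ 1`, we may write `b = 1 - t * ω` with `0 ≤ t ≤ 1`, and since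
`(a - c) * (a + c) = ω ^ 2`, the desired inequality
`t ^ 2 * ω ^ 2 ≤ (1 - c) ^ 2 - (1 - a) ^ 2 = (a - c) * (2 - (a + c))`
follows from `(a + c) * (1 + t ^ 2) ≤ 2`. For fixed `t`, both `a` and `c` are largest in the
isosceles case `ω = 1 / 2`, where `a = 1 - t / 2` and `c ^ 2 = (1 - t) * (3 - t) / 4`; this leaves
an inequality in `t` alone.
-/

section Triangle

variable {c ω t : ℝ}

theorem sqrt_height_sq_add_sq_le (hω₀ : 0 ≤ ω) (hω : ω ≤ 1 / 2) (ht : t ≤ 1)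
    (hb : c ^ 2 + (1 - ω) ^ 2 = (1 - t * ω) ^ 2) :
    √(c ^ 2 + ω ^ 2) ≤ 1 - t / 2 := by
  refine Real.sqrt_le_iff.2 ⟨by linarith, ?_⟩
  have gap_eq : (1 - t / 2) ^ 2 - (c ^ 2 + ω ^ 2) =
      (1 - 2 * ω) * (1 - t) + t ^ 2 * ((1 / 2 - ω) * (1 / 2 + ω)) := by
    linear_combination -hb
  have left_nonneg : 0 ≤ (1 - 2 * ω) * (1 - t) := mul_nonneg (by linarith) (by linarith)
  have right_nonneg : 0 ≤ t ^ 2 * ((1 / 2 - ω) * (1 / 2 + ω)) :=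
    mul_nonneg (sq_nonneg t) (mul_nonneg (by linarith) (by linarith))
  rw [← sub_nonneg, gap_eq]
  exact add_nonneg left_nonneg right_nonneg

theorem height_sq_le (hω : ω ≤ 1 / 2) (ht₀ : 0 ≤ t) (ht : t ≤ 1)
    (hb : c ^ 2 + (1 - ω) ^ 2 = (1 - t * ω) ^ 2) :
    c ^ 2 ≤ (1 - t) * (3 - t) / 4 := by
  have gap_eq : (1 - t) * (3 - t) / 4 - c ^ 2 =
      (1 - t) * ((1 / 2 - ω) * ((1 - t) + (1 + t) * (1 / 2 - ω))) := by
    linear_combination -hb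
  have ht' : 0 ≤ 1 - t := sub_nonneg.2 ht
  have hω' : 0 ≤ 1 / 2 - ω := sub_nonneg.2 hω
  rw [← sub_nonneg, gap_eq]
  exact mul_nonneg ht' (mul_nonneg hω' (add_nonneg ht' (mul_nonneg (by linarith) hω')))

/-- With `s = 2 - t` this is the estimate `√(s ^ 2 - 1) ≤ s - 1 / (2 * s) ≤ s - 1 / 4`. -/
theorem height_le (hω : ω ≤ 1 / 2) (ht₀ : 0 ≤ t) (ht : t ≤ 1)
    (hb : c ^ 2 + (1 - ω) ^ 2 = (1 - t * ω) ^ 2) :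
    c ≤ 7 / 8 - t / 2 := by
  have height_sq_le_sq : c ^ 2 ≤ (7 / 8 - t / 2) ^ 2 :=
    calc c ^ 2 ≤ (1 - t) * (3 - t) / 4 := height_sq_le hω ht₀ ht hb
      _ ≤ (7 / 8 - t / 2) ^ 2 := by linarith
  exact le_of_abs_le (abs_le_of_sq_le_sq height_sq_le_sq (by linarith))

theorem sub_mul_one_add_sq_le_two (ht : 0 ≤ t) : (15 / 8 - t) * (1 + t ^ 2) ≤ 2 := by
  have gap_eq : 2 - (15 / 8 - t) * (1 + t ^ 2) =
      1 / 8 + t * ((t - 15 / 16) ^ 2 + 31 / 256) := by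
    ring
  rw [← sub_nonneg, gap_eq]
  positivity

theorem sqrt_add_height_mul_one_add_sq_le_two (hω₀ : 0 ≤ ω) (hω : ω ≤ 1 / 2)
    (ht₀ : 0 ≤ t) (ht : t ≤ 1) (hb : c ^ 2 + (1 - ω) ^ 2 = (1 - t * ω) ^ 2) :
    (√(c ^ 2 + ω ^ 2) + c) * (1 + t ^ 2) ≤ 2 :=
  calc (√(c ^ 2 + ω ^ 2) + c) * (1 + t ^ 2)
      ≤ (15 / 8 - t) * (1 + t ^ 2) := by
        gcongr
        linarith [sqrt_height_sq_add_sq_le hω₀ hω ht hb, height_le hω ht₀ ht hb]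
    _ ≤ 2 := sub_mul_one_add_sq_le_two ht₀

theorem exists_sqrt_height_sq_add_sq_eq_one_sub_mul (hω : 0 ≤ ω)
    (h : c ^ 2 + (1 - ω) ^ 2 ≤ 1) :
    ∃ t, 0 ≤ t ∧ t ≤ 1 ∧ √(c ^ 2 + (1 - ω) ^ 2) = 1 - t * ω := by
  set b := √(c ^ 2 + (1 - ω) ^ 2)
  have b_le : b ≤ 1 := Real.sqrt_le_one.2 h
  have le_b : 1 - ω ≤ b := Real.le_sqrt_of_sq_le (le_add_of_nonneg_left (sq_nonneg c))
  have div_mul_eq : (1 - b) / ω * ω = 1 - b :=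
    div_mul_cancel_of_imp fun hω_zero => by linarith
  exact ⟨(1 - b) / ω, div_nonneg (by linarith) hω, div_le_one_of_le₀ (by linarith) hω,
    by linarith⟩

theorem sum_sq_one_sub_sqrt_le_of_le_half (hω₀ : 0 ≤ ω) (hω : ω ≤ 1 / 2)
    (h : c ^ 2 + (1 - ω) ^ 2 ≤ 1) :
    (1 - √(c ^ 2 + ω ^ 2)) ^ 2 + (1 - √(c ^ 2 + (1 - ω) ^ 2)) ^ 2 ≤ (1 - c) ^ 2 := by
  obtain ⟨t, ht₀, ht, hb⟩ := exists_sqrt_height_sq_add_sq_eq_one_sub_mul hω₀ h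
  have hb_sq : c ^ 2 + (1 - ω) ^ 2 = (1 - t * ω) ^ 2 := by
    rw [← hb, Real.sq_sqrt (by positivity)]
  have sum_le : (√(c ^ 2 + ω ^ 2) + c) * (1 + t ^ 2) ≤ 2 :=
    sqrt_add_height_mul_one_add_sq_le_two hω₀ hω ht₀ ht hb_sq
  have a_sq : √(c ^ 2 + ω ^ 2) ^ 2 = c ^ 2 + ω ^ 2 := Real.sq_sqrt (by positivity)
  have c_le : c ≤ √(c ^ 2 + ω ^ 2) :=
    Real.le_sqrt_of_sq_le (le_add_of_nonneg_right (sq_nonneg ω))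
  rw [hb]
  set a := √(c ^ 2 + ω ^ 2)
  have sq_le_mul : (t * ω) ^ 2 ≤ (a - c) * (2 - (a + c)) :=
    calc (t * ω) ^ 2 = (a - c) * (t ^ 2 * (a + c)) := by linear_combination -t ^ 2 * a_sq
      _ ≤ (a - c) * (2 - (a + c)) :=
        mul_le_mul_of_nonneg_left (by linarith) (sub_nonneg.2 c_le)
  linarith

end Triangle

theorem sum_bound_lemma_general (c ω : ℝ)
    (h1 : c ^ 2 + ω ^ 2 ≤ 1) (h2 : c ^ 2 + (1 - ω) ^ 2 ≤ 1) :
    (1 - √(c ^ 2 + ω ^ 2)) ^ 2 + (1 - √(c ^ 2 + (1 - ω) ^ 2)) ^ 2 ≤ (1 - c) ^ 2 := by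
  rcases le_total ω (1 / 2) with hω | hω
  · have hω₀ : 0 ≤ ω := by nlinarith
    exact sum_sq_one_sub_sqrt_le_of_le_half hω₀ hω h2
  · have hω₁ : 0 ≤ 1 - ω := by nlinarith
    have reflected := sum_sq_one_sub_sqrt_le_of_le_half (c := c) hω₁ (by linarith)
      (by rwa [sub_sub_cancel])
    rwa [sub_sub_cancel, add_comm] at reflected

/-- Lemma 1 of the paper: if `c ≥ 0`, `ω ≥ 0`, `c² + ω² ≤ 1` and `c² + (1 − ω)² ≤ 1`,
then `(1 − √(c² + ω²))² + (1 − √(c² + (1 − ω)²))² ≤ (1 − c)²`. -/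
theorem sum_bound_lemma (c ω : ℝ) (hc : 0 ≤ c) (hω : 0 ≤ ω)
    (h1 : c ^ 2 + ω ^ 2 ≤ 1) (h2 : c ^ 2 + (1 - ω) ^ 2 ≤ 1) :
    (1 - Real.sqrt (c ^ 2 + ω ^ 2)) ^ 2 + (1 - Real.sqrt (c ^ 2 + (1 - ω) ^ 2)) ^ 2
      ≤ (1 - c) ^ 2 :=
  sum_bound_lemma_general c ω h1 h2
end

section
/- Let d ≥ 1, let c ≥ 0, and let ω = (ω_1,…,ω_d) ∈ [0,1)^d. Then ∑_{x ∈ ℤ^d, x ≠ 0} ( max(0, 1 − √(c² + ‖ω + x‖²)) )² ≤ ∑_{i=1}^d ( max(0, 1 − √(c² + (1 − ω_i)²)) )², where ‖·‖ is the Euclidean norm on ℝ^d and the left-hand side is a sum of nonnegative terms (only finitely many of which are nonzero). -/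
/-!
Put `F v = (max 0 (1 - √v)) ^ 2` and `u = c²`. The one analytic input is the splitting inequality
`F (v + s²) + F (v + (1 - s)²) ≤ F v` for `v ≥ 0` and `s ∈ [0, 1]`. Let `e`, `p`, `q` be
the square roots of `v`, `v + s²`, `v + (1 - s)²`, with `p, q ≤ 1`. If `p² + q² ≥ 1 + e²`, the
inequality holds because `(1 - p) / (1 + p)` is decreasing in `p`; otherwise it follows from a lower
bound for `(p + q)²`.

Since `F ≥ 0`, its case `s = 0` shows that `F` vanishes on `[1, ∞)`, so only the points
`x ∈ {-1, 0}^d` contribute to the lattice sum. The contributions of all these points, `x = 0`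
included, add up to at most `F (u + ∑ i, ω i ^ 2) + ∑ i, F (u + (1 - ω i)²)`, by induction on the
number of coordinates: a new coordinate `j` shifts `u` by `ω j ^ 2` or by `(1 - ω j)²`, and the
splitting inequality recombines the two shifted copies `F (u + ω j ^ 2 + (1 - ω i)²)` and
`F (u + (1 - ω j)² + (1 - ω i)²)` of each term. The contribution of `x = 0` then cancels.
-/

section ConeSq

/-- The squared height of the unit cone `y ↦ max 0 (1 - ‖y‖)`, as a function of `u = ‖y‖²`. -/
noncomputable def coneSq (u : ℝ) : ℝ := (max 0 (1 - √u)) ^ 2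

lemma coneSq_nonneg (u : ℝ) : 0 ≤ coneSq u := sq_nonneg _

lemma coneSq_antitone : Antitone coneSq := fun _ _ h ↦ by
  unfold coneSq
  gcongr

lemma coneSq_of_le_one {u : ℝ} (h : u ≤ 1) : coneSq u = (1 - √u) ^ 2 := by
  rw [coneSq, max_eq_right (sub_nonneg.2 (Real.sqrt_le_one.2 h))]

lemma coneSq_of_one_le {u : ℝ} (h : 1 ≤ u) : coneSq u = 0 := by
  rw [coneSq, max_eq_left (sub_nonpos.2 (Real.one_le_sqrt.2 h)), zero_pow two_ne_zero]

lemma one_sub_sq_mul_one_add_le {e p : ℝ} (hep : e ≤ p) (hp : p ≤ 1) :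
    (1 - p) ^ 2 * (1 + e) ≤ (1 - e) * (1 - p ^ 2) := by
  have h : 0 ≤ (1 - p) * (p - e) := mul_nonneg (sub_nonneg.2 hp) (sub_nonneg.2 hep)
  linarith

lemma one_sub_sq_add_one_sub_sq_le_of_one_add_sq_le {e p q : ℝ} (he : 0 ≤ e) (hep : e ≤ p)
    (heq : e ≤ q) (hp : p ≤ 1) (hq : q ≤ 1) (h : 1 + e ^ 2 ≤ p ^ 2 + q ^ 2) :
    (1 - p) ^ 2 + (1 - q) ^ 2 ≤ (1 - e) ^ 2 := by
  have he1 : 0 ≤ 1 - e := by linarith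
  refine le_of_mul_le_mul_right ?_ (by linarith : 0 < 1 + e)
  calc ((1 - p) ^ 2 + (1 - q) ^ 2) * (1 + e)
      = (1 - p) ^ 2 * (1 + e) + (1 - q) ^ 2 * (1 + e) := add_mul ..
    _ ≤ (1 - e) * (1 - p ^ 2) + (1 - e) * (1 - q ^ 2) :=
      add_le_add (one_sub_sq_mul_one_add_le hep hp) (one_sub_sq_mul_one_add_le heq hq)
    _ = (1 - e) * (2 - (p ^ 2 + q ^ 2)) := by ring
    _ ≤ (1 - e) * (1 - e ^ 2) := mul_le_mul_of_nonneg_left (by linarith) he1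
    _ = (1 - e) ^ 2 * (1 + e) := by ring

lemma one_sub_sq_add_one_sub_sq_le_of_sq_le {e p q s t : ℝ} (he : 0 ≤ e) (hp : 0 ≤ p) (hq : 0 ≤ q)
    (hst : s + t = 1) (hps : p ^ 2 = e ^ 2 + s ^ 2) (hqt : q ^ 2 = e ^ 2 + t ^ 2)
    (h : e ^ 2 ≤ 2 * (s * t)) : (1 - p) ^ 2 + (1 - q) ^ 2 ≤ (1 - e) ^ 2 := by
  obtain ⟨j, hj⟩ : ∃ j, j = s * t - e ^ 2 / 2 := ⟨_, rfl⟩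
  have hst4 : s * t ≤ 1 / 4 := by linarith [four_mul_le_sq_add s t, hst ▸ one_pow (M := ℝ) 2]
  have hj0 : 0 ≤ j := by linarith
  have hj1 : j ≤ 1 / 4 := by linarith [sq_nonneg e]
  have he1 : e ≤ 3 / 4 := by nlinarith
  have h_add_sq : p ^ 2 + q ^ 2 = 1 + e ^ 2 - 2 * j := by
    rw [hps, hqt, hj]; linear_combination (s + t + 1) * hst
  -- Brahmagupta's identity: `p * q` is the modulus of `(e + i s) (e + i t)`.
  have h_mul_sq : (p * q) ^ 2 = (e ^ 2 / 2 - j) ^ 2 + e ^ 2 := by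
    rw [mul_pow, hps, hqt, hj]; linear_combination e ^ 2 * (s + t + 1) * hst
  have h_mul : j ^ 2 + 2 * e * (1 - j) ≤ 2 * (p * q) := by
    refine le_of_sq_le_sq ?_ (by positivity)
    have h_lin : 0 ≤ e ^ 2 * j * (1 - j) := mul_nonneg (by positivity) (by linarith)
    have h_sq : 0 ≤ j ^ 2 * (4 - 4 * e - j ^ 2) := mul_nonneg (by positivity) (by nlinarith)
    have h_cub : 0 ≤ e * j ^ 3 := by positivity
    have h_quart : 0 ≤ e ^ 4 := by positivity
    linarith
  have h_add : 1 + e - j ≤ p + q := le_of_sq_le_sq (by linarith) (by positivity)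
  linarith

lemma one_sub_sq_add_one_sub_sq_le {e p q s t : ℝ} (he : 0 ≤ e) (hp : 0 ≤ p) (hq : 0 ≤ q)
    (hst : s + t = 1) (hps : p ^ 2 = e ^ 2 + s ^ 2) (hqt : q ^ 2 = e ^ 2 + t ^ 2)
    (hp1 : p ≤ 1) (hq1 : q ≤ 1) : (1 - p) ^ 2 + (1 - q) ^ 2 ≤ (1 - e) ^ 2 := by
  rcases le_total (e ^ 2) (2 * (s * t)) with h | h
  · exact one_sub_sq_add_one_sub_sq_le_of_sq_le he hp hq hst hps hqt h
  · refine one_sub_sq_add_one_sub_sq_le_of_one_add_sq_le he ?_ ?_ hp1 hq1 ?_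
    · exact le_of_sq_le_sq (hps ▸ le_add_of_nonneg_right (sq_nonneg s)) hp
    · exact le_of_sq_le_sq (hqt ▸ le_add_of_nonneg_right (sq_nonneg t)) hq
    · rw [hps, hqt]
      linear_combination h - (s + t + 1) * hst

lemma coneSq_add_sq_add_coneSq_add_sq_le {u s t : ℝ} (hu : 0 ≤ u) (hst : s + t = 1) :
    coneSq (u + s ^ 2) + coneSq (u + t ^ 2) ≤ coneSq u := by
  have hus : u ≤ u + s ^ 2 := le_add_of_nonneg_right (sq_nonneg s)
  have hut : u ≤ u + t ^ 2 := le_add_of_nonneg_right (sq_nonneg t)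
  rcases le_total 1 (u + s ^ 2) with hs1 | hs1
  · rw [coneSq_of_one_le hs1, zero_add]
    exact coneSq_antitone hut
  rcases le_total 1 (u + t ^ 2) with ht1 | ht1
  · rw [coneSq_of_one_le ht1, add_zero]
    exact coneSq_antitone hus
  rw [coneSq_of_le_one hs1, coneSq_of_le_one ht1, coneSq_of_le_one (hus.trans hs1)]
  refine one_sub_sq_add_one_sub_sq_le (Real.sqrt_nonneg _) (Real.sqrt_nonneg _) (Real.sqrt_nonneg _)
    hst ?_ ?_ (Real.sqrt_le_one.2 hs1) (Real.sqrt_le_one.2 ht1)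
  · rw [Real.sq_sqrt hu, Real.sq_sqrt (hu.trans hus)]
  · rw [Real.sq_sqrt hu, Real.sq_sqrt (hu.trans hut)]

end ConeSq

section Powerset

variable {ι M N : Type*} [AddCommMonoid M]

lemma sum_powerset_insert_piecewise [AddCommMonoid N] [DecidableEq ι] {j : ι} {t : Finset ι}
    (hj : j ∉ t) (F : M → N) (a b : ι → M) (u : M) :
    ∑ S ∈ (insert j t).powerset, F (u + ∑ i ∈ insert j t, S.piecewise b a i)
      = ∑ S ∈ t.powerset, F (u + a j + ∑ i ∈ t, S.piecewise b a i)
        + ∑ S ∈ t.powerset, F (u + b j + ∑ i ∈ t, S.piecewise b a i) := by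
  rw [Finset.sum_powerset_insert hj]
  congr 1 <;> refine Finset.sum_congr rfl fun S hS ↦ ?_
  · have hjS : j ∉ S := fun h ↦ hj (Finset.mem_powerset.1 hS h)
    rw [Finset.sum_insert hj, Finset.piecewise_eq_of_notMem _ _ _ hjS, add_assoc]
  · have h_off : ∀ i ∈ t, (insert j S).piecewise b a i = S.piecewise b a i := fun i hi ↦
      Finset.piecewise_insert_of_ne S b a (ne_of_mem_of_not_mem hi hj)
    rw [Finset.sum_insert hj, Finset.piecewise_insert_self, Finset.sum_congr rfl h_off, add_assoc]

variable [PartialOrder M] [IsOrderedAddMonoid M]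

lemma apply_add_sum_le [Preorder N] {F : M → N} {a : ι → M} (ha : ∀ i, 0 ≤ a i)
    (hF : ∀ i u, 0 ≤ u → F (u + a i) ≤ F u) (t : Finset ι) {u : M} (hu : 0 ≤ u) :
    F (u + ∑ i ∈ t, a i) ≤ F u := by
  classical
  induction t using Finset.induction_on with
  | empty => simp
  | insert j t hj ih =>
    rw [Finset.sum_insert hj, add_left_comm, add_comm]
    exact (hF j _ (add_nonneg hu (Finset.sum_nonneg fun i _ ↦ ha i))).trans ih

lemma sum_powerset_piecewise_le [AddCommMonoid N] [PartialOrder N] [IsOrderedAddMonoid N]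
    [DecidableEq ι] {F : M → N} {a b : ι → M} (ha : ∀ i, 0 ≤ a i) (hb : ∀ i, 0 ≤ b i)
    (hF_nonneg : ∀ u, 0 ≤ u → 0 ≤ F u)
    (hF_split : ∀ i u, 0 ≤ u → F (u + a i) + F (u + b i) ≤ F u)
    (t : Finset ι) {u : M} (hu : 0 ≤ u) :
    ∑ S ∈ t.powerset, F (u + ∑ i ∈ t, S.piecewise b a i)
      ≤ F (u + ∑ i ∈ t, a i) + ∑ i ∈ t, F (u + b i) := by
  induction t using Finset.induction_on generalizing u with
  | empty => simp
  | insert j t hj ih =>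
    have hF_le : ∀ i u, 0 ≤ u → F (u + a i) ≤ F u := fun i u hu ↦
      le_of_add_le_of_nonneg_left (hF_split i u hu) (hF_nonneg _ (add_nonneg hu (hb i)))
    have h_recombine : ∑ i ∈ t, F (u + a j + b i) + ∑ i ∈ t, F (u + b j + b i)
        ≤ ∑ i ∈ t, F (u + b i) := by
      rw [← Finset.sum_add_distrib]
      refine Finset.sum_le_sum fun i _ ↦ ?_
      rw [add_right_comm u (a j), add_right_comm u (b j)]
      exact hF_split j _ (add_nonneg hu (hb i))
    rw [sum_powerset_insert_piecewise hj, Finset.sum_insert hj, Finset.sum_insert hj]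
    calc _ ≤ (F (u + a j + ∑ i ∈ t, a i) + ∑ i ∈ t, F (u + a j + b i))
          + (F (u + b j + ∑ i ∈ t, a i) + ∑ i ∈ t, F (u + b j + b i)) :=
        add_le_add (ih (add_nonneg hu (ha j))) (ih (add_nonneg hu (hb j)))
      _ = F (u + (a j + ∑ i ∈ t, a i)) + (F (u + b j + ∑ i ∈ t, a i)
          + (∑ i ∈ t, F (u + a j + b i) + ∑ i ∈ t, F (u + b j + b i))) := by
        rw [add_assoc u]; abel
      _ ≤ F (u + (a j + ∑ i ∈ t, a i)) + (F (u + b j) + ∑ i ∈ t, F (u + b i)) := by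
        gcongr
        exact apply_add_sum_le ha hF_le t (add_nonneg hu (hb j))

end Powerset

section CubeVertex

variable {ι : Type*} [DecidableEq ι]

/-- The vertex of the lattice cube `[-1, 0]^ι` whose nonzero coordinates are those in `S`.
For `ω ∈ (0, 1)^ι` these vertices are the lattice points `x` with `ω + x ∈ (-1, 1)^ι`. -/
def cubeVertex (S : Finset ι) : ι → ℤ := S.piecewise (-1) 0

lemma cubeVertex_apply_ne_zero_iff {S : Finset ι} {i : ι} : cubeVertex S i ≠ 0 ↔ i ∈ S := by
  by_cases hi : i ∈ S <;> simp [cubeVertex, hi]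

lemma cubeVertex_injective : Function.Injective (cubeVertex : Finset ι → ι → ℤ) := fun S T h ↦ by
  ext i
  rw [← cubeVertex_apply_ne_zero_iff, h, cubeVertex_apply_ne_zero_iff]

lemma cubeVertex_ne_zero_iff {S : Finset ι} : cubeVertex S ≠ 0 ↔ S.Nonempty := by
  simp only [Function.ne_iff, Pi.zero_apply, cubeVertex_apply_ne_zero_iff, Finset.Nonempty]

lemma exists_cubeVertex_eq [Finite ι] {x : ι → ℤ} (hx : ∀ i, x i = -1 ∨ x i = 0) :
    ∃ S, cubeVertex S = x := by
  cases nonempty_fintype ι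
  refine ⟨Finset.univ.filter (x · ≠ 0), funext fun i ↦ ?_⟩
  rcases hx i with hi | hi <;> simp [cubeVertex, hi]

lemma add_cubeVertex_sq {R : Type*} [CommRing R] (ω : ι → R) (S : Finset ι) (i : ι) :
    (ω i + cubeVertex S i) ^ 2
      = S.piecewise (fun i ↦ (1 - ω i) ^ 2) (fun i ↦ ω i ^ 2) i := by
  by_cases hi : i ∈ S
  · simp only [cubeVertex, Finset.piecewise_eq_of_mem _ _ _ hi, Pi.neg_apply, Pi.one_apply]
    push_cast
    ring
  · simp [cubeVertex, hi]

lemma tsum_ne_zero_eq_sum_cubeVertex [Fintype ι] {α : Type*} [AddCommMonoid α]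
    [TopologicalSpace α] {g : (ι → ℤ) → α} (hg : ∀ x i, x i ≠ -1 → x i ≠ 0 → g x = 0) :
    ∑' x : {x : ι → ℤ // x ≠ 0}, g x = ∑ S ∈ Finset.univ.erase ∅, g (cubeVertex S) := by
  let vertex (S : {S : Finset ι // S ≠ ∅}) : {x : ι → ℤ // x ≠ 0} :=
    ⟨cubeVertex S, cubeVertex_ne_zero_iff.2 (Finset.nonempty_iff_ne_empty.2 S.2)⟩
  have h_inj : Function.Injective vertex := fun S T h ↦
    Subtype.ext (cubeVertex_injective (congrArg Subtype.val h))
  have h_supp : (Function.support fun x : {x : ι → ℤ // x ≠ 0} ↦ g x) ⊆ Set.range vertex := by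
    rintro ⟨x, hx⟩ hgx
    obtain ⟨S, rfl⟩ := exists_cubeVertex_eq fun i ↦
      or_iff_not_imp_left.2 fun h ↦ of_not_not fun h' ↦ hgx (hg x i h h')
    exact ⟨⟨S, (cubeVertex_ne_zero_iff.1 hx).ne_empty⟩, rfl⟩
  rw [← h_inj.tsum_eq h_supp, tsum_fintype]
  exact (Finset.sum_subtype _ (by simp) fun S ↦ g (cubeVertex S)).symm

end CubeVertex

lemma one_le_add_intCast_sq {R : Type*} [CommRing R] [LinearOrder R] [IsStrictOrderedRing R]
    {w : R} (hw : w ∈ Set.Icc 0 1) {n : ℤ} (hn : n ≠ -1) (hn0 : n ≠ 0) :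
    1 ≤ (w + n) ^ 2 := by
  obtain ⟨hw0, hw1⟩ := hw
  rw [one_le_sq_iff_one_le_abs, le_abs']
  rcases (by omega : n ≤ -2 ∨ 1 ≤ n) with h | h
  · have : (n : R) ≤ -2 := by exact_mod_cast h
    left; linarith
  · have : (1 : R) ≤ n := by exact_mod_cast h
    right; linarith

/-- A nonnegative function `F` of the squared distance to a point such that, on every line, the
value at the foot of the perpendicular dominates the sum of the values at the two ends of any unit
segment through that foot. Only the values of `F` on `[0, ∞)` matter. -/
structure DominatesUnitSplits (F : ℝ → ℝ) : Prop where
  nonneg : ∀ u, 0 ≤ u → 0 ≤ F u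
  split : ∀ u s, 0 ≤ u → s ∈ Set.Icc 0 1 → F (u + s ^ 2) + F (u + (1 - s) ^ 2) ≤ F u

lemma coneSq_dominatesUnitSplits : DominatesUnitSplits coneSq where
  nonneg u _ := coneSq_nonneg u
  split _ s hu _ := coneSq_add_sq_add_coneSq_add_sq_le hu (add_sub_cancel s 1)

lemma DominatesUnitSplits.eq_zero_of_one_le {F : ℝ → ℝ} (hF : DominatesUnitSplits F) {u : ℝ}
    (hu : 1 ≤ u) : F u = 0 := by
  have h := hF.split (u - 1) 0 (sub_nonneg.2 hu) (by simp)
  rw [zero_pow two_ne_zero, add_zero, sub_zero, one_pow, sub_add_cancel,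
    add_le_iff_nonpos_right] at h
  exact h.antisymm (hF.nonneg u (zero_le_one.trans hu))

theorem lattice_sum_bound_general {ι : Type*} [Fintype ι] {F : ℝ → ℝ} (hF : DominatesUnitSplits F)
    {u : ℝ} (hu : 0 ≤ u) {ω : ι → ℝ} (hω : ∀ i, ω i ∈ Set.Icc 0 1) :
    ∑' x : {x : ι → ℤ // x ≠ 0}, F (u + ∑ i, (ω i + (x.1 i : ℝ)) ^ 2)
      ≤ ∑ i, F (u + (1 - ω i) ^ 2) := by
  classical
  have h_zero (x : ι → ℤ) (i : ι) (h : x i ≠ -1) (h' : x i ≠ 0) :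
      F (u + ∑ i, (ω i + (x i : ℝ)) ^ 2) = 0 := by
    refine hF.eq_zero_of_one_le (le_add_of_nonneg_of_le hu ?_)
    exact (one_le_add_intCast_sq (hω i) h h').trans <|
      Finset.single_le_sum (f := fun i ↦ (ω i + (x i : ℝ)) ^ 2) (fun _ _ ↦ sq_nonneg _)
        (Finset.mem_univ i)
  have h_cube := sum_powerset_piecewise_le (fun i ↦ sq_nonneg (ω i)) (fun i ↦ sq_nonneg (1 - ω i))
    hF.nonneg (fun i u hu ↦ hF.split u (ω i) hu (hω i)) Finset.univ hu
  rw [Finset.powerset_univ, ← Finset.add_sum_erase _ _ (Finset.mem_univ ∅),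
    Finset.piecewise_empty] at h_cube
  rw [tsum_ne_zero_eq_sum_cubeVertex (g := fun x ↦ F (u + ∑ i, (ω i + (x i : ℝ)) ^ 2)) h_zero]
  simp only [add_cubeVertex_sq]
  exact le_of_add_le_add_left h_cube

/-- The induction step bound in the proof of Theorem 2: for `c ≥ 0` and
`ω ∈ [0,1)^d`,
`∑_{x ∈ ℤ^d, x ≠ 0} (max(0, 1 − √(c² + ‖ω + x‖²)))² ≤ ∑ᵢ (max(0, 1 − √(c² + (1 − ωᵢ)²)))²`,
where `‖ω + x‖² = ∑ᵢ (ωᵢ + xᵢ)²` is the squared Euclidean norm. -/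
theorem lattice_sum_bound (d : ℕ) (hd : 1 ≤ d) (c : ℝ) (hc : 0 ≤ c)
    (ω : Fin d → ℝ) (hω : ∀ i, 0 ≤ ω i ∧ ω i < 1) :
    (∑' x : {x : Fin d → ℤ // x ≠ 0},
        (max 0 (1 - Real.sqrt (c ^ 2 + ∑ i, (ω i + (x.1 i : ℝ)) ^ 2))) ^ 2)
      ≤ ∑ i, (max 0 (1 - Real.sqrt (c ^ 2 + (1 - ω i) ^ 2))) ^ 2 :=
  lattice_sum_bound_general coneSq_dominatesUnitSplits (sq_nonneg c)
    fun i ↦ Set.Ico_subset_Icc_self (hω i)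
end

section
/- For all real θ > 0, h > 0 and ω ∈ ℝ: ∑_{k ∈ ℤ} θ / ((ω + k/h)² + θ²) = π h coth(πθh) · 1 / (1 + sin²(πhω) (coth²(πθh) − 1)). -/
open Real

/-!
Up to sign and scale, the summand is the imaginary part of `1 / (z + k)` with `z = h (ω + i θ)`.
In the expansion `π cot (π z) = 1 / z + ∑_{n ≥ 1} (1 / (z - n) + 1 / (z + n))` the terms `±n` have
to be paired for convergence. The imaginary part of `1 / (z + k)` is however a constant multiple
of `|z + k|⁻²`, which is summable over `ℤ`, so in imaginary parts the pairing can be undone.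
-/

section ImCot

open Complex

lemma normSq_sin (z : ℂ) : normSq (sin z) = Real.sin z.re ^ 2 + Real.sinh z.im ^ 2 := by
  rw [sin_eq, ← ofReal_sin, ← ofReal_cosh, ← ofReal_cos, ← ofReal_sinh, ← ofReal_mul, ← ofReal_mul,
    normSq_add_mul_I]
  linear_combination Real.sin z.re ^ 2 * Real.cosh_sq z.im +
    Real.sinh z.im ^ 2 * Real.sin_sq_add_cos_sq z.re

lemma im_cos_mul_conj_sin (z : ℂ) :
    (cos z * (starRingEnd ℂ) (sin z)).im = -(Real.sinh z.im * Real.cosh z.im) := by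
  rw [sin_eq, cos_eq, ← ofReal_sin, ← ofReal_cosh, ← ofReal_cos, ← ofReal_sinh]
  simp only [← ofReal_mul, map_add, map_mul, conj_ofReal, conj_I, mul_im, mul_re, add_re, add_im,
    sub_re, sub_im, ofReal_re, ofReal_im, neg_re, neg_im, I_re, I_im]
  linear_combination -(Real.sinh z.im * Real.cosh z.im) * Real.sin_sq_add_cos_sq z.re

lemma im_cot (z : ℂ) :
    (Complex.cot z).im =
      -(Real.sinh z.im * Real.cosh z.im / (Real.sin z.re ^ 2 + Real.sinh z.im ^ 2)) := by
  rw [Complex.cot, div_eq_mul_inv, inv_def, ← mul_assoc, im_mul_ofReal, im_cos_mul_conj_sin,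
    normSq_sin, neg_mul, div_eq_mul_inv]

end ImCot

lemma sinh_mul_cosh_div_add_sinh_sq {t : ℝ} (ht : t ≠ 0) (s : ℝ) :
    sinh t * cosh t / (s + sinh t ^ 2) =
      cosh t / sinh t * (1 / (1 + s * ((cosh t / sinh t) ^ 2 - 1))) := by
  have sinh_ne : sinh t ≠ 0 := sinh_ne_zero.mpr ht
  have coth_sq_sub_one : (cosh t / sinh t) ^ 2 - 1 = 1 / sinh t ^ 2 := by
    rw [div_pow, cosh_sq]
    field_simp
    ring
  have denominator : 1 + s * (1 / sinh t ^ 2) = (s + sinh t ^ 2) / sinh t ^ 2 := by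
    field_simp
    ring
  rw [coth_sq_sub_one, denominator, one_div_div]
  field_simp

lemma hasSum_int_of_hasSum_add_neg {M : Type*} [AddCommGroup M] [UniformSpace M]
    [IsUniformAddGroup M] [CompleteSpace M] [T2Space M] {f : ℤ → M} {a : M} (hf : Summable f)
    (ha : HasSum (fun n : ℕ => f (n + 1) + f (-(n + 1))) a) : HasSum f (a + f 0) := by
  have hpos : Summable fun n : ℕ => f (n + 1) :=
    hf.comp_injective (i := fun n : ℕ => (n + 1 : ℤ)) fun m n h => by simpa using h
  have hneg : Summable fun n : ℕ => f (-(n + 1)) :=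
    hf.comp_injective (i := fun n : ℕ => (-(n + 1) : ℤ)) fun m n h => by simpa using h
  rw [ha.unique (hpos.hasSum.add hneg.hasSum), add_right_comm]
  exact hpos.hasSum.of_add_one_of_neg_add_one hneg.hasSum

lemma summable_inv_normSq_add_intCast (z : ℂ) :
    Summable fun k : ℤ => (Complex.normSq (z + k))⁻¹ := by
  simpa [Complex.normSq_eq_norm_sq] using
    (EisensteinSeries.linear_right_summable z 1 (k := 2) le_rfl).norm

lemma summable_im_inv_add_intCast (z : ℂ) : Summable fun k : ℤ => (z + k)⁻¹.im := by
  simpa [Complex.inv_im, div_eq_mul_inv] using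
    (summable_inv_normSq_add_intCast z).mul_left (-z.im)

lemma hasSum_im_inv_add_intCast {z : ℂ} (hz : z ∈ Complex.integerComplement) :
    HasSum (fun k : ℤ => (z + k)⁻¹.im) (π * Complex.cot (π * z)).im := by
  have cot_series : HasSum (fun n : ℕ => 1 / (z - (n + 1)) + 1 / (z + (n + 1)))
      (π * Complex.cot (π * z) - 1 / z) :=
    cot_series_rep' hz ▸ (summable_cotTerm hz).hasSum
  have im_cot_series : HasSum
      (fun n : ℕ => (z + (n + 1 : ℤ))⁻¹.im + (z + (-(n + 1) : ℤ))⁻¹.im)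
      (π * Complex.cot (π * z) - 1 / z).im := by
    convert Complex.hasSum_im cot_series using 2 with n
    simp [sub_eq_add_neg, add_comm]
  simpa using hasSum_int_of_hasSum_add_neg (summable_im_inv_add_intCast z) im_cot_series

lemma hasSum_div_add_intCast_sq_add_sq (a : ℝ) {b : ℝ} (hb : b ≠ 0) :
    HasSum (fun k : ℤ => b / ((a + k) ^ 2 + b ^ 2))
      (π * (sinh (π * b) * cosh (π * b) / (sin (π * a) ^ 2 + sinh (π * b) ^ 2))) := by
  have not_int : (⟨a, b⟩ : ℂ) ∈ Complex.integerComplement := by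
    rintro ⟨k, hk⟩
    exact hb (by simpa using (congrArg Complex.im hk).symm)
  have summand (k : ℤ) : b / ((a + k) ^ 2 + b ^ 2) = -((⟨a, b⟩ + k : ℂ)⁻¹.im) := by
    simp [Complex.inv_im, Complex.normSq_apply, pow_two, neg_div]
  simpa [summand, im_cot] using (hasSum_im_inv_add_intCast not_int).neg

theorem exponential_lattice_sum_general {θ h : ℝ} (hθ : θ ≠ 0) (hh : h ≠ 0) (ω : ℝ) :
    HasSum (fun k : ℤ => θ / ((ω + (k : ℝ) / h) ^ 2 + θ ^ 2))
      (π * h * (cosh (π * θ * h) / sinh (π * θ * h)) *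
        (1 / (1 + sin (π * h * ω) ^ 2 * ((cosh (π * θ * h) / sinh (π * θ * h)) ^ 2 - 1)))) := by
  have rescale (k : ℤ) : θ / ((ω + k / h) ^ 2 + θ ^ 2) =
      h * (θ * h / ((h * ω + k) ^ 2 + (θ * h) ^ 2)) := by
    have : (h * ω + k) ^ 2 + (θ * h) ^ 2 = h ^ 2 * ((ω + k / h) ^ 2 + θ ^ 2) := by field_simp
    rw [this]
    field_simp
  have unit_spacing := (hasSum_div_add_intCast_sq_add_sq (h * ω) (mul_ne_zero hθ hh)).mul_left h
  have arg_ne_zero : π * (θ * h) ≠ 0 := mul_ne_zero pi_ne_zero (mul_ne_zero hθ hh)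
  rw [sinh_mul_cosh_div_add_sinh_sq arg_ne_zero] at unit_spacing
  simpa only [rescale, mul_assoc, mul_left_comm h π] using unit_spacing

/-- The closed form of the lattice sum of the exponential spectral density:
`∑_{k ∈ ℤ} θ/((ω + k/h)² + θ²) = πh coth(πθh) / (1 + sin²(πhω)(coth²(πθh) − 1))`,
where `coth t = cosh t / sinh t`. -/
theorem exponential_lattice_sum (θ h ω : ℝ) (hθ : 0 < θ) (hh : 0 < h) :
    (∑' k : ℤ, θ / ((ω + (k : ℝ) / h) ^ 2 + θ ^ 2))
      = π * h * (Real.cosh (π * θ * h) / Real.sinh (π * θ * h)) *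
          (1 / (1 + Real.sin (π * h * ω) ^ 2 *
            ((Real.cosh (π * θ * h) / Real.sinh (π * θ * h)) ^ 2 - 1))) :=
  (exponential_lattice_sum_general hθ.ne' hh.ne' ω).tsum_eq
end

section
/- For all real θ > 0 and h > 0: ∫_{−∞}^{∞} (θ² / (θ² + ω²)²) sin²(πωh) dω = −(π²h/2) (cosh(πθh) − sinh(πθh)) (cosh(πθh) − (1/(πθh) + 1) sinh(πθh)). -/
open Real

/-!
Since `sin² y = (1 - cos 2y) / 2`, the integral is a difference of two values of the cosine
transform of `1 / (θ² + ω²)²`. Up to scaling, this density is the Fourier transform of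
`(1 + s|t|) exp (-s|t|)`: splitting at `0` gives two Laplace integrals, at the conjugate points
`s ± 2πiw`. The kernel is continuous and both functions are integrable, so Fourier inversion
recovers the kernel as the cosine transform.
-/

open MeasureTheory Set Filter
open scoped Topology FourierTransform Nat

section Laplace

lemma integrableOn_pow_mul_cexp_neg_mul_Ioi (n : ℕ) {c : ℂ} (hc : 0 < c.re) :
    IntegrableOn (fun t : ℝ ↦ (t : ℂ) ^ n * Complex.exp (-c * t)) (Ioi 0) := by
  have hreal : IntegrableOn (fun t : ℝ ↦ t ^ n * Real.exp (-c.re * t)) (Ioi 0) := by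
    simpa only [rpow_natCast, rpow_one] using
      integrableOn_rpow_mul_exp_neg_mul_rpow (neg_one_lt_zero.trans_le n.cast_nonneg)
        one_pos hc
  refine hreal.mono' (by fun_prop) ((ae_restrict_iff' measurableSet_Ioi).2 (.of_forall ?_))
  intro t ht
  simp [Complex.norm_exp, abs_of_pos (mem_Ioi.1 ht)]

lemma tendsto_pow_mul_cexp_neg_mul_atTop_nhds_zero (n : ℕ) {c : ℂ} (hc : 0 < c.re) :
    Tendsto (fun t : ℝ ↦ (t : ℂ) ^ n * Complex.exp (-c * t)) atTop (𝓝 0) := by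
  rw [tendsto_zero_iff_norm_tendsto_zero]
  refine (tendsto_rpow_mul_exp_neg_mul_atTop_nhds_zero n c.re hc).congr' ?_
  filter_upwards [eventually_gt_atTop 0] with t ht
  simp [Complex.norm_exp, abs_of_pos ht]

lemma integral_pow_mul_cexp_neg_mul_Ioi (n : ℕ) {c : ℂ} (hc : 0 < c.re) :
    ∫ t in Ioi (0 : ℝ), (t : ℂ) ^ n * Complex.exp (-c * t) = n ! / c ^ (n + 1) := by
  have hc0 : c ≠ 0 := by rintro rfl; simp at hc
  induction n with
  | zero =>
    have hc' : (-c).re < 0 := by simpa using hc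
    simp [-neg_mul, integral_exp_mul_complex_Ioi hc']
  | succ n ih =>
    have hderiv (t : ℝ) : HasDerivAt (fun t : ℝ ↦ (t : ℂ) ^ (n + 1) * Complex.exp (-c * t))
        ((n + 1) * ((t : ℂ) ^ n * Complex.exp (-c * t)) -
          c * ((t : ℂ) ^ (n + 1) * Complex.exp (-c * t))) t := by
      have hid := (hasDerivAt_id t).ofReal_comp
      convert! (hid.pow (n + 1)).mul (hid.const_mul (-c)).cexp using 1
      simp only [id_eq, Pi.pow_apply, Nat.cast_add, Nat.cast_one, add_tsub_cancel_right,
        Complex.ofReal_one, mul_one]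
      ring
    have hn := (integrableOn_pow_mul_cexp_neg_mul_Ioi n hc).const_mul ((n : ℂ) + 1)
    have hn1 := (integrableOn_pow_mul_cexp_neg_mul_Ioi (n + 1) hc).const_mul c
    have hparts := integral_Ioi_of_hasDerivAt_of_tendsto' (fun t _ ↦ hderiv t) (hn.sub hn1)
      (tendsto_pow_mul_cexp_neg_mul_atTop_nhds_zero (n + 1) hc)
    rw [integral_sub hn hn1, integral_const_mul, integral_const_mul, ih] at hparts
    refine mul_left_cancel₀ hc0 ?_
    simp only [Complex.ofReal_zero, zero_pow n.succ_ne_zero, zero_mul, sub_self,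
      sub_eq_zero] at hparts
    rw [← hparts, Nat.factorial_succ]
    push_cast
    field_simp
    ring

lemma integrableOn_one_add_mul_mul_cexp_neg_mul_Ioi (s : ℂ) {c : ℂ} (hc : 0 < c.re) :
    IntegrableOn (fun t : ℝ ↦ (1 + s * t) * Complex.exp (-c * t)) (Ioi 0) := by
  refine ((integrableOn_pow_mul_cexp_neg_mul_Ioi 0 hc).add
    ((integrableOn_pow_mul_cexp_neg_mul_Ioi 1 hc).const_mul s)).congr (.of_forall fun t ↦ ?_)
  simp only [Pi.add_apply, pow_zero, pow_one, one_mul, add_mul, mul_assoc]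

lemma integral_one_add_mul_mul_cexp_neg_mul_Ioi (s : ℂ) {c : ℂ} (hc : 0 < c.re) :
    ∫ t in Ioi (0 : ℝ), (1 + s * t) * Complex.exp (-c * t) = 1 / c + s / c ^ 2 := by
  have h0 := integrableOn_pow_mul_cexp_neg_mul_Ioi 0 hc
  have h1 := (integrableOn_pow_mul_cexp_neg_mul_Ioi 1 hc).const_mul s
  have hsum := integral_add h0 h1
  rw [integral_const_mul, integral_pow_mul_cexp_neg_mul_Ioi 0 hc,
    integral_pow_mul_cexp_neg_mul_Ioi 1 hc] at hsum
  simpa only [pow_zero, pow_one, one_mul, add_mul, mul_assoc, zero_add, one_add_one_eq_two,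
    Nat.factorial_zero, Nat.factorial_one, Nat.cast_one, mul_one_div] using hsum

end Laplace

section EvenFunctions

variable {E : Type*} [NormedAddCommGroup E]

lemma integrable_comp_abs {f : ℝ → E} (hf : IntegrableOn f (Ioi 0)) :
    Integrable fun t ↦ f |t| := by
  have hpos : IntegrableOn (fun t ↦ f |t|) (Ioi 0) :=
    hf.congr_fun (fun t ht ↦ by rw [abs_of_pos (mem_Ioi.1 ht)]) measurableSet_Ioi
  have hneg : IntegrableOn (fun t ↦ f |t|) (Iio 0) := by
    rw [← neg_zero] at hpos
    simpa only [abs_neg] using hpos.comp_neg_Iio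
  rw [← integrableOn_univ, ← Iic_union_Ioi (a := (0 : ℝ)), integrableOn_union,
    integrableOn_Iic_iff_integrableOn_Iio]
  exact ⟨hneg, hpos⟩

lemma integral_eq_integral_Ioi_add_integral_Ioi_comp_neg [NormedSpace ℝ E] {f : ℝ → E}
    (hf : Integrable f) :
    ∫ t, f t = (∫ t in Ioi (0 : ℝ), f t) + ∫ t in Ioi (0 : ℝ), f (-t) := by
  rw [integral_comp_neg_Ioi, neg_zero, add_comm,
    intervalIntegral.integral_Iic_add_Ioi hf.integrableOn hf.integrableOn]

lemma fourier_comp_abs [NormedSpace ℂ E] {f : ℝ → E} (hf : IntegrableOn f (Ioi 0)) (w : ℝ) :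
    𝓕 (fun t ↦ f |t|) w =
      (∫ t in Ioi (0 : ℝ), Complex.exp (-(2 * π * w * Complex.I) * t) • f t) +
        ∫ t in Ioi (0 : ℝ), Complex.exp (2 * π * w * Complex.I * t) • f t := by
  have hint : Integrable fun t : ℝ ↦ Complex.exp (↑(-2 * π * t * w) * Complex.I) • f |t| := by
    have := (Real.fourierIntegral_convergent_iff w).2 (integrable_comp_abs hf)
    simpa [Circle.smul_def, Real.fourierChar_apply, mul_assoc, mul_left_comm] using this
  rw [fourier_real_eq_integral_exp_smul, integral_eq_integral_Ioi_add_integral_Ioi_comp_neg hint]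
  congr 1 <;> refine setIntegral_congr_fun measurableSet_Ioi fun t ht ↦ ?_
  · simp only [abs_of_pos (mem_Ioi.1 ht)]
    push_cast
    ring_nf
  · simp only [abs_neg, abs_of_pos (mem_Ioi.1 ht)]
    push_cast
    ring_nf

end EvenFunctions

lemma integral_mul_cos_of_fourier_eq {V : Type*} [NormedAddCommGroup V] [InnerProductSpace ℝ V]
    [FiniteDimensional ℝ V] [MeasurableSpace V] [BorelSpace V] {f g : V → ℝ}
    (hf : Continuous f) (hfi : Integrable f) (hgi : Integrable g)
    (hfg : ∀ w, 𝓕 (fun v ↦ (f v : ℂ)) w = g w) (v : V) :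
    ∫ w, g w * Real.cos (2 * π * inner ℝ w v) = f v := by
  have hfg' : 𝓕 (fun v ↦ (f v : ℂ)) = fun w ↦ (g w : ℂ) := funext hfg
  have hinv : 𝓕⁻ (fun w ↦ (g w : ℂ)) v = f v := by
    rw [← hfg']
    exact congrFun ((Complex.continuous_ofReal.comp hf).fourierInv_fourier_eq hfi.ofReal
      (hfg' ▸ hgi.ofReal)) v
  have hint : Integrable fun w ↦ Complex.exp (↑(2 * π * inner ℝ w v) * Complex.I) • (g w : ℂ) := by
    have := (Real.fourierIntegral_convergent_iff (-v)).2 (hgi.ofReal (𝕜 := ℂ))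
    simpa [Circle.smul_def, Real.fourierChar_apply] using this
  have hre : ∫ w, (Complex.exp (↑(2 * π * inner ℝ w v) * Complex.I) • (g w : ℂ)).re =
      (∫ w, Complex.exp (↑(2 * π * inner ℝ w v) * Complex.I) • (g w : ℂ)).re := integral_re hint
  calc ∫ w, g w * Real.cos (2 * π * inner ℝ w v)
      = ∫ w, (Complex.exp (↑(2 * π * inner ℝ w v) * Complex.I) • (g w : ℂ)).re := by
        refine integral_congr_ae (.of_forall fun w ↦ ?_)
        simp only [smul_eq_mul, Complex.re_mul_ofReal, Complex.exp_ofReal_mul_I_re]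
        ring
    _ = f v := by
        rw [hre, ← fourierInv_eq', hinv, Complex.ofReal_re]

lemma one_div_add_div_sq_add_one_div_add_div_sq {K : Type*} [Field K] {s c d : K} (hc : c ≠ 0)
    (hd : d ≠ 0) (h : c + d = 2 * s) :
    (1 / c + s / c ^ 2) + (1 / d + s / d ^ 2) = 4 * s ^ 3 / (c * d) ^ 2 := by
  field_simp
  linear_combination (c * d + s * (c + d + 2 * s)) * h

section Matern

/-- The Matérn covariance function of smoothness `3/2`, with inverse length scale `s`
(`√3 / ℓ` in the usual parametrization). -/
noncomputable def maternKernel (s t : ℝ) : ℝ :=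
  (1 + s * |t|) * Real.exp (-s * |t|)

lemma continuous_maternKernel (s : ℝ) : Continuous (maternKernel s) := by
  unfold maternKernel
  fun_prop

lemma ofReal_maternKernel (s t : ℝ) :
    (maternKernel s t : ℂ) = (1 + s * (|t| : ℝ)) * Complex.exp (-s * (|t| : ℝ)) := by
  simp only [maternKernel]
  push_cast
  rfl

variable {s : ℝ}

lemma integrable_maternKernel (hs : 0 < s) : Integrable (maternKernel s) := by
  have hcomplex : Integrable fun t ↦ (maternKernel s t : ℂ) := by
    simp_rw [ofReal_maternKernel]
    exact integrable_comp_abs (integrableOn_one_add_mul_mul_cexp_neg_mul_Ioi s (by simpa using hs))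
  exact hcomplex.re

lemma fourier_maternKernel (hs : 0 < s) (w : ℝ) :
    𝓕 (fun t ↦ (maternKernel s t : ℂ)) w =
      ((4 * s ^ 3 / (s ^ 2 + (2 * π * w) ^ 2) ^ 2 : ℝ) : ℂ) := by
  have hre {z : ℂ} (hz : z.re = 0) : 0 < (s - z).re := by simpa [hz] using hs
  have hne {z : ℂ} (hz : z.re = 0) : (s : ℂ) - z ≠ 0 := fun h ↦ by
    simpa [h] using hre hz
  have hlaplace {z : ℂ} (hz : z.re = 0) :
      ∫ t in Ioi (0 : ℝ), Complex.exp (z * t) • ((1 + s * t) * Complex.exp (-s * t)) =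
        1 / (s - z) + s / (s - z) ^ 2 := by
    rw [← integral_one_add_mul_mul_cexp_neg_mul_Ioi s (hre hz)]
    congr 1 with t
    rw [smul_eq_mul, mul_left_comm, ← Complex.exp_add]
    ring_nf
  have hy : (2 * π * w * Complex.I).re = 0 := by simp
  have hy' : (-(2 * π * w * Complex.I)).re = 0 := by simp
  simp_rw [ofReal_maternKernel]
  rw [fourier_comp_abs (integrableOn_one_add_mul_mul_cexp_neg_mul_Ioi s (by simpa using hs)),
    hlaplace hy', hlaplace hy,
    one_div_add_div_sq_add_one_div_add_div_sq (hne hy') (hne hy) (by ring)]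
  have hmul : (s - -(2 * π * w * Complex.I)) * (s - 2 * π * w * Complex.I) =
      s ^ 2 + (2 * π * w) ^ 2 := by
    linear_combination (-(2 * π * w) ^ 2 : ℂ) * Complex.I_sq
  rw [hmul]
  push_cast
  rfl

end Matern

section CauchySquared

lemma integrable_inv_sq_add_sq_sq {a : ℝ} (ha : a ≠ 0) :
    Integrable fun w : ℝ ↦ ((a ^ 2 + w ^ 2) ^ 2)⁻¹ := by
  have hone : Integrable fun w : ℝ ↦ ((1 + w ^ 2) ^ 2)⁻¹ := by
    have := integrable_rpow_neg_one_add_norm_sq (E := ℝ) (μ := volume) (r := 4) (by simp)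
    refine this.congr (.of_forall fun w ↦ ?_)
    simp only [norm_eq_abs, sq_abs]
    rw [show (-4 / 2 : ℝ) = -(2 : ℕ) by norm_num, rpow_neg (by positivity), rpow_natCast]
  refine ((hone.comp_div ha).const_mul (a ^ 4)⁻¹).congr (.of_forall fun w ↦ ?_)
  field_simp

lemma integrable_cos_div_sq_add_sq_sq {a : ℝ} (ha : a ≠ 0) (k : ℝ) :
    Integrable fun w : ℝ ↦ Real.cos (k * w) / (a ^ 2 + w ^ 2) ^ 2 :=
  (integrable_inv_sq_add_sq_sq ha).bdd_mul (c := 1) (by fun_prop)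
    (.of_forall fun w ↦ abs_cos_le_one _)

variable {a : ℝ}

lemma integral_cos_div_sq_add_sq_sq (ha : 0 < a) (k : ℝ) :
    ∫ w : ℝ, Real.cos (k * w) / (a ^ 2 + w ^ 2) ^ 2 = π / (2 * a ^ 3) * maternKernel a k := by
  have hs : 0 < 2 * π * a := by positivity
  have hspec (w : ℝ) : 4 * (2 * π * a) ^ 3 / ((2 * π * a) ^ 2 + (2 * π * w) ^ 2) ^ 2 =
      2 * a ^ 3 / π * ((a ^ 2 + w ^ 2) ^ 2)⁻¹ := by
    field_simp
    norm_num
  have hscale : maternKernel (2 * π * a) (k / (2 * π)) = maternKernel a k := by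
    have : 2 * π * a * |k / (2 * π)| = a * |k| := by
      rw [abs_div, abs_of_pos two_pi_pos]
      field_simp
    simp only [maternKernel, neg_mul, this]
  have hinv := integral_mul_cos_of_fourier_eq (continuous_maternKernel _)
    (integrable_maternKernel hs) ((integrable_inv_sq_add_sq_sq ha.ne').const_mul (2 * a ^ 3 / π))
    (fun w ↦ by rw [fourier_maternKernel hs, hspec]) (k / (2 * π))
  have hphase (w : ℝ) : 2 * π * inner ℝ w (k / (2 * π)) = k * w := by
    rw [real_inner_eq_re_inner, RCLike.inner_apply, conj_trivial, RCLike.re_to_real]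
    field_simp
  simp_rw [hscale, hphase, mul_assoc, integral_const_mul] at hinv
  simp_rw [← hinv, div_eq_inv_mul (Real.cos _)]
  rw [← mul_assoc, div_mul_div_comm, mul_comm π, div_self (by positivity), one_mul]

lemma integral_sin_sq_div_sq_add_sq_sq (ha : 0 < a) (k : ℝ) :
    ∫ w : ℝ, Real.sin (k * w) ^ 2 / (a ^ 2 + w ^ 2) ^ 2 =
      π / (4 * a ^ 3) * (1 - maternKernel a (2 * k)) := by
  have hhalf (w : ℝ) : Real.sin (k * w) ^ 2 / (a ^ 2 + w ^ 2) ^ 2 =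
      1 / 2 * (Real.cos (0 * w) / (a ^ 2 + w ^ 2) ^ 2 -
        Real.cos (2 * k * w) / (a ^ 2 + w ^ 2) ^ 2) := by
    rw [Real.sin_sq_eq_half_sub, zero_mul, Real.cos_zero, mul_assoc 2 k w]
    ring
  have hzero : maternKernel a 0 = 1 := by simp [maternKernel]
  simp_rw [hhalf]
  rw [integral_const_mul, integral_sub (integrable_cos_div_sq_add_sq_sq ha.ne' 0)
    (integrable_cos_div_sq_add_sq_sq ha.ne' (2 * k)), integral_cos_div_sq_add_sq_sq ha,
    integral_cos_div_sq_add_sq_sq ha, hzero]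
  ring

end CauchySquared

lemma cosh_sub_sinh_mul_cosh_sub_one_div_add_one_mul_sinh {x : ℝ} (hx : x ≠ 0) :
    (Real.cosh x - Real.sinh x) * (Real.cosh x - (1 / x + 1) * Real.sinh x) =
      -(1 - (1 + 2 * x) * Real.exp (-(2 * x))) / (2 * x) := by
  have hdouble : Real.exp (-(2 * x)) = Real.exp (-x) ^ 2 := by
    rw [← Real.exp_nat_mul]
    push_cast
    ring_nf
  have hinv : Real.exp x * Real.exp (-x) = 1 := by
    rw [← Real.exp_add, add_neg_cancel, Real.exp_zero]
  rw [Real.cosh_sub_sinh, Real.cosh_eq, Real.sinh_eq, hdouble]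
  field_simp
  linear_combination -hinv

/-- The integral formula used in the proof of Corollary 1:
`∫ℝ (θ²/(θ² + ω²)²) sin²(πωh) dω
  = −(π²h/2)(cosh(πθh) − sinh(πθh))(cosh(πθh) − (1/(πθh) + 1) sinh(πθh))`. -/
theorem sin_sq_integral (θ h : ℝ) (hθ : 0 < θ) (hh : 0 < h) :
    (∫ ω : ℝ, (θ ^ 2 / (θ ^ 2 + ω ^ 2) ^ 2) * Real.sin (π * ω * h) ^ 2)
      = -(π ^ 2 * h / 2) * (Real.cosh (π * θ * h) - Real.sinh (π * θ * h)) *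
          (Real.cosh (π * θ * h) - (1 / (π * θ * h) + 1) * Real.sinh (π * θ * h)) := by
  have hx : π * θ * h ≠ 0 := by positivity
  have hintegrand (ω : ℝ) : θ ^ 2 / (θ ^ 2 + ω ^ 2) ^ 2 * Real.sin (π * ω * h) ^ 2 =
      θ ^ 2 * (Real.sin (π * h * ω) ^ 2 / (θ ^ 2 + ω ^ 2) ^ 2) := by
    rw [mul_right_comm π ω h]
    ring
  have hkernel : maternKernel θ (2 * (π * h)) =
      (1 + 2 * (π * θ * h)) * Real.exp (-(2 * (π * θ * h))) := by
    rw [maternKernel, abs_of_pos (by positivity)]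
    ring_nf
  simp_rw [hintegrand]
  rw [integral_const_mul, integral_sin_sq_div_sq_add_sq_sq hθ, hkernel,
    mul_assoc (-(π ^ 2 * h / 2)), cosh_sub_sinh_mul_cosh_sub_one_div_add_one_mul_sinh hx]
  field_simp
  ring
end

section
/- Let F_θ(ω) = θ/(θ² + ω²) for θ > 0 and ω ∈ ℝ. Then there exist constants C > 0 and ε > 0 such that for all θ > 0 and h > 0 with θh < ε: | σ_h²(F_θ) − (2π²/3) θh | ≤ C (θh)². In particular σ_h²(F_θ) = (2π²/3) θh + O((θh)²) as θh → 0. -/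
open MeasureTheory Real

/-- The optimal mean integrated interpolation error for a stationary Gaussian
process with spectral density `F` observed on the grid `hℤ`:
`σ_h²(F) = ∫ℝ F(ω) (∑_{k ≠ 0} F(ω + k/h)) / (∑_{k ∈ ℤ} F(ω + k/h)) dω`.
(Division by zero is `0` in Lean, so the integrand is `0` where the denominator
vanishes, as in the convention of the paper.) -/
noncomputable def sigmaSq (h : ℝ) (F : ℝ → ℝ) : ℝ :=
  ∫ ω : ℝ, F ω * (∑' k : {k : ℤ // k ≠ 0}, F (ω + (k.1 : ℝ) / h)) /
    (∑' k : ℤ, F (ω + (k : ℝ) / h))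

/-!
Rescaling reduces to `h = 1` and decay rate `a = θ h`. The partial fraction expansion of the
cotangent sums the periodized density `P(x) = ∑ₖ F(x + k)` in closed form, with `1 / P`
proportional to `cosh (2πa) - cos (2πx)`, so the error `∫ (F - F² / P)` only involves the values at
`0` and `1` of the Fourier transform of `F²`. As `F²` is, up to a constant, the Fourier transform
of the Matérn covariance of smoothness `3/2`, Fourier inversion gives these values, and the error
is exactly `π (coth u - 1 / u)` with `u = 2πθh`. Comparing the partial fractions
`coth u - 1 / u = ∑ₙ 2u / (u² + π²n²)` termwise with the series of `ζ(2)` and `ζ(4)` bounds this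
between `π (u / 3 - u³ / 45)` and `π u / 3`.
-/

open Set Filter Topology FourierTransform

/-! ### Rewriting the interpolation error -/

lemma mul_tsum_ne_div_tsum {ι 𝕜 : Type*} [Field 𝕜] [TopologicalSpace 𝕜] [IsTopologicalAddGroup 𝕜]
    [T2Space 𝕜] {f : ι → 𝕜} (hf : Summable f) (hf₀ : ∑' k, f k ≠ 0) (i : ι) :
    f i * (∑' k : {k // k ≠ i}, f k) / ∑' k, f k = f i - f i ^ 2 / ∑' k, f k := by
  have hsplit : f i + ∑' k : {k // k ≠ i}, f k = ∑' k, f k := by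
    rw [← hf.sum_add_tsum_compl (s := {i}), Finset.sum_singleton, Finset.coe_singleton]
    rfl
  rw [eq_sub_of_add_eq' hsplit]
  field_simp

lemma sigmaSq_eq_integral_sub_sq_div {h : ℝ} {F : ℝ → ℝ}
    (hF : ∀ ω, Summable fun k : ℤ => F (ω + k / h))
    (hF₀ : ∀ ω, ∑' k : ℤ, F (ω + k / h) ≠ 0) :
    sigmaSq h F = ∫ ω, (F ω - F ω ^ 2 / ∑' k : ℤ, F (ω + k / h)) := by
  refine integral_congr_ae (.of_forall fun ω => ?_)
  simpa using mul_tsum_ne_div_tsum (hF ω) (hF₀ ω) 0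

lemma sigmaSq_eq_sigmaSq_one {h : ℝ} (hh : 0 < h) (F : ℝ → ℝ) :
    sigmaSq h F = sigmaSq 1 fun x => h⁻¹ * F (x / h) := by
  have hscale := Measure.integral_comp_div (fun ω : ℝ =>
    F ω * (∑' k : {k : ℤ // k ≠ 0}, F (ω + (k.1 : ℝ) / h)) / ∑' k : ℤ, F (ω + (k : ℝ) / h)) h
  rw [abs_of_pos hh, smul_eq_mul, ← inv_mul_eq_iff_eq_mul₀ hh.ne', ← integral_const_mul] at hscale
  refine hscale.symm.trans (integral_congr_ae (.of_forall fun x => ?_))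
  simp only [div_one, add_div, tsum_mul_left]
  field_simp

/-! ### The exponential spectral density -/

/-- The spectral density `F_a` of the exponential covariance function with decay rate `a`,
without the normalising factor `1 / π`. -/
noncomputable def expSpectralDensity (a x : ℝ) : ℝ := a / (a ^ 2 + x ^ 2)

lemma expSpectralDensity_mul_mul {c : ℝ} (hc : c ≠ 0) (a x : ℝ) :
    expSpectralDensity (c * a) (c * x) = c⁻¹ * expSpectralDensity a x := by
  simp only [expSpectralDensity, mul_pow, ← mul_add]
  rw [sq c, mul_assoc, mul_div_mul_left _ _ hc, div_mul_eq_div_div_swap]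
  field_simp

lemma sigmaSq_expSpectralDensity_eq_sigmaSq_one {h : ℝ} (hh : 0 < h) (θ : ℝ) :
    sigmaSq h (expSpectralDensity θ) = sigmaSq 1 (expSpectralDensity (θ * h)) := by
  rw [sigmaSq_eq_sigmaSq_one hh]
  congr 1
  ext x
  rw [← expSpectralDensity_mul_mul hh.ne', mul_div_cancel₀ x hh.ne', mul_comm h]

section

variable {a : ℝ}

lemma expSpectralDensity_pos (ha : 0 < a) (x : ℝ) : 0 < expSpectralDensity a x := by
  unfold expSpectralDensity
  positivity

lemma integral_expSpectralDensity (ha : 0 < a) : ∫ x, expSpectralDensity a x = π := by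
  have hcov : expSpectralDensity a = fun x => a⁻¹ * (1 + (x / a) ^ 2)⁻¹ := by
    ext x
    unfold expSpectralDensity
    field_simp
  rw [hcov, integral_const_mul, Measure.integral_comp_div fun x : ℝ => (1 + x ^ 2)⁻¹,
    integral_univ_inv_one_add_sq, abs_of_pos ha, smul_eq_mul, inv_mul_cancel_left₀ ha.ne']

lemma integrable_expSpectralDensity (ha : 0 < a) : Integrable (expSpectralDensity a) :=
  .of_integral_ne_zero (by rw [integral_expSpectralDensity ha]; exact pi_ne_zero)

lemma integrable_expSpectralDensity_sq (ha : 0 < a) :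
    Integrable fun x => expSpectralDensity a x ^ 2 := by
  have hbound (x : ℝ) : ‖expSpectralDensity a x‖ ≤ a⁻¹ := by
    rw [norm_of_nonneg (expSpectralDensity_pos ha x).le, expSpectralDensity,
      div_le_iff₀ (by positivity), mul_add, sq a, inv_mul_cancel_left₀ ha.ne']
    exact le_add_of_nonneg_right (by positivity)
  have hint := integrable_expSpectralDensity ha
  simpa only [sq] using hint.bdd_mul hint.aestronglyMeasurable (.of_forall hbound)

end

/-! ### Periodization of the density -/

lemma cot_add_mul_I_im (x y : ℝ) :
    (Complex.cot (x + y * Complex.I)).im = -(sinh (2 * y) / (cosh (2 * y) - cos (2 * x))) := by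
  have hcos : Complex.cos (x + y * Complex.I) = ⟨cos x * cosh y, -(sin x * sinh y)⟩ := by
    apply Complex.ext <;>
      simp [Complex.cos_add_mul_I, ← Complex.ofReal_cos, ← Complex.ofReal_sin,
        ← Complex.ofReal_cosh, ← Complex.ofReal_sinh]
  have hsin : Complex.sin (x + y * Complex.I) = ⟨sin x * cosh y, cos x * sinh y⟩ := by
    apply Complex.ext <;>
      simp [Complex.sin_add_mul_I, ← Complex.ofReal_cos, ← Complex.ofReal_sin,
        ← Complex.ofReal_cosh, ← Complex.ofReal_sinh]
  have hnormSq : 2 * (sin x * cosh y * (sin x * cosh y) + cos x * sinh y * (cos x * sinh y)) =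
      cosh (2 * y) - cos (2 * x) := by
    rw [cosh_two_mul, cos_two_mul]
    linear_combination 2 * cosh y ^ 2 * sin_sq_add_cos_sq x + (1 - 2 * cos x ^ 2) * cosh_sq y
  have hnum : 2 * (sin x * sinh y * (sin x * cosh y) + cos x * cosh y * (cos x * sinh y)) =
      sinh (2 * y) := by
    rw [sinh_two_mul]
    linear_combination 2 * sinh y * cosh y * sin_sq_add_cos_sq x
  rw [Complex.cot_eq_cos_div_sin, hcos, hsin, Complex.div_im, Complex.normSq_mk, ← hnormSq,
    ← hnum, mul_div_mul_left _ _ two_ne_zero]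
  ring

lemma hasSum_int_of_hasSum_add_neg_s10 {f : ℤ → ℝ} (hf : ∀ k, 0 ≤ f k) {s : ℝ}
    (hs : HasSum (fun n : ℕ => f (n + 1) + f (-(n + 1))) s) : HasSum f (f 0 + s) := by
  have hpos : Summable fun n : ℕ => f (n + 1) :=
    .of_nonneg_of_le (fun _ => hf _) (fun _ => le_add_of_nonneg_right (hf _)) hs.summable
  have hneg : Summable fun n : ℕ => f (-(n + 1)) :=
    .of_nonneg_of_le (fun _ => hf _) (fun _ => le_add_of_nonneg_left (hf _)) hs.summable
  rw [hs.unique (hpos.hasSum.add hneg.hasSum), ← add_assoc, add_comm (f 0)]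
  exact hpos.hasSum.of_add_one_of_neg_add_one hneg.hasSum

lemma hasSum_expSpectralDensity_add_int {a : ℝ} (ha : 0 < a) (x : ℝ) :
    HasSum (fun k : ℤ => expSpectralDensity a (x + k))
      (π * (sinh (2 * (π * a)) / (cosh (2 * (π * a)) - cos (2 * (π * x))))) := by
  set z : ℂ := ⟨x, a⟩ with hz
  have hzc : z ∈ Complex.integerComplement :=
    UpperHalfPlane.coe_mem_integerComplement ⟨z, ha⟩
  have hterm (t : ℝ) : (1 / (z + t)).im = -expSpectralDensity a (x + t) := by
    simp only [expSpectralDensity, hz, one_div, Complex.inv_im, Complex.normSq_apply,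
      Complex.add_re, Complex.add_im, Complex.ofReal_re, Complex.ofReal_im, add_zero]
    ring
  have hcot : (π * Complex.cot (π * z) - 1 / z).im =
      -(π * (sinh (2 * (π * a)) / (cosh (2 * (π * a)) - cos (2 * (π * x))))) +
        expSpectralDensity a x := by
    have hπz : (π : ℂ) * z = (π * x : ℝ) + (π * a : ℝ) * Complex.I := by
      apply Complex.ext <;> simp [hz]
    rw [Complex.sub_im, Complex.im_ofReal_mul, hπz, cot_add_mul_I_im]
    have hterm₀ := hterm 0
    rw [Complex.ofReal_zero, add_zero, add_zero] at hterm₀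
    rw [hterm₀]
    ring
  have hseries : HasSum (fun n : ℕ => 1 / (z - (n + 1)) + 1 / (z + (n + 1)))
      (π * Complex.cot (π * z) - 1 / z) := by
    rw [cot_series_rep' hzc]
    exact (summable_cotTerm hzc).hasSum
  have him := ((Complex.hasSum_iff _ _).1 hseries).2.neg
  rw [hcot] at him
  convert hasSum_int_of_hasSum_add_neg_s10 (f := fun k : ℤ => expSpectralDensity a (x + k))
    (fun _ => (expSpectralDensity_pos ha _).le) (him.congr_fun fun n => ?_) using 1
  · simp
  · have hp := hterm (n + 1)
    have hn := hterm (-(n + 1))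
    push_cast at hp hn ⊢
    rw [Complex.add_im, sub_eq_add_neg, hp, hn]
    ring

/-! ### The Matérn covariance and the squared density -/

section Laplace

variable {z : ℂ}

lemma norm_pow_mul_cexp (n : ℕ) {t : ℝ} (ht : 0 ≤ t) :
    ‖(t : ℂ) ^ n * Complex.exp (-z * t)‖ = t ^ (n : ℝ) * rexp (-z.re * t) := by
  simp [Complex.norm_exp, abs_of_nonneg ht]

lemma tendsto_pow_mul_cexp_atTop (hz : 0 < z.re) (n : ℕ) :
    Tendsto (fun t : ℝ => (t : ℂ) ^ n * Complex.exp (-z * t)) atTop (𝓝 0) :=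
  squeeze_zero_norm' ((eventually_ge_atTop 0).mono fun _ ht => (norm_pow_mul_cexp n ht).le)
    (tendsto_rpow_mul_exp_neg_mul_atTop_nhds_zero n z.re hz)

lemma integrableOn_pow_mul_cexp_Ioi (hz : 0 < z.re) (n : ℕ) :
    IntegrableOn (fun t : ℝ => (t : ℂ) ^ n * Complex.exp (-z * t)) (Ioi 0) := by
  have hbound : IntegrableOn (fun t : ℝ => t ^ (n : ℝ) * rexp (-z.re * t)) (Ioi 0) := by
    simpa only [rpow_one] using integrableOn_rpow_mul_exp_neg_mul_rpow (p := 1)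
      (neg_one_lt_zero.trans_le n.cast_nonneg) one_pos hz
  refine hbound.mono' (by fun_prop) ?_
  filter_upwards [ae_restrict_mem measurableSet_Ioi] with t ht
  exact (norm_pow_mul_cexp n (le_of_lt ht)).le

lemma integral_pow_mul_cexp_Ioi (hz : 0 < z.re) (n : ℕ) :
    ∫ t in Ioi (0 : ℝ), (t : ℂ) ^ n * Complex.exp (-z * t) = n.factorial / z ^ (n + 1) := by
  have hz₀ : z ≠ 0 := by rintro rfl; exact hz.false
  induction n with
  | zero => simpa using integral_exp_mul_complex_Ioi (a := -z) (by simpa) 0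
  | succ n ih =>
    have hderiv (t : ℝ) : HasDerivAt (fun t : ℝ => (t : ℂ) ^ (n + 1) * Complex.exp (-z * t))
        ((n + 1) * (t ^ n * Complex.exp (-z * t)) -
          z * (t ^ (n + 1) * Complex.exp (-z * t))) t := by
      have hid : HasDerivAt (fun t : ℝ => (t : ℂ)) 1 t := Complex.ofRealCLM.hasDerivAt
      refine ((hid.pow (n + 1)).mul (hid.const_mul (-z)).cexp).congr_deriv ?_
      simp only [Pi.pow_apply, add_tsub_cancel_right]
      push_cast
      ring
    have hn := (integrableOn_pow_mul_cexp_Ioi hz n).const_mul (n + 1 : ℂ)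
    have hsucc := (integrableOn_pow_mul_cexp_Ioi hz (n + 1)).const_mul z
    have hparts := integral_Ioi_of_hasDerivAt_of_tendsto' (fun t _ => hderiv t) (hn.sub hsucc)
      (tendsto_pow_mul_cexp_atTop hz (n + 1))
    rw [integral_sub hn hsucc, integral_const_mul, integral_const_mul, ih, Complex.ofReal_zero,
      zero_pow n.succ_ne_zero, zero_mul, sub_zero, sub_eq_zero] at hparts
    rw [eq_div_of_mul_eq hz₀ ((mul_comm _ _).trans hparts.symm), Nat.factorial_succ]
    push_cast
    field_simp
    ring

end Laplace

section HalfLines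

variable {E : Type*} [NormedAddCommGroup E] {f : ℝ → E}

lemma integrableOn_Iic_of_comp_neg_Ioi (hf : IntegrableOn (fun t => f (-t)) (Ioi 0)) :
    IntegrableOn f (Iic 0) := by
  rw [integrableOn_Iic_iff_integrableOn_Iio]
  rw [← neg_zero] at hf
  simpa only [neg_neg] using hf.comp_neg_Iio

lemma integrable_of_integrableOn_Ioi (hf : IntegrableOn f (Ioi 0))
    (hf' : IntegrableOn (fun t => f (-t)) (Ioi 0)) : Integrable f := by
  rw [← integrableOn_univ, ← Iic_union_Ioi (a := (0 : ℝ))]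
  exact (integrableOn_Iic_of_comp_neg_Ioi hf').union hf

lemma integral_eq_integral_Ioi_add [NormedSpace ℝ E] (hf : IntegrableOn f (Ioi 0))
    (hf' : IntegrableOn (fun t => f (-t)) (Ioi 0)) :
    ∫ t, f t = (∫ t in Ioi 0, f t) + ∫ t in Ioi 0, f (-t) := by
  rw [integral_comp_neg_Ioi, neg_zero, add_comm,
    intervalIntegral.integral_Iic_add_Ioi (integrableOn_Iic_of_comp_neg_Ioi hf') hf]

end HalfLines

/-- The Matérn covariance function of smoothness `3/2` and inverse length scale `u`. Its Fourier
transform is proportional to the square of an exponential spectral density. -/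
noncomputable def maternCov (u t : ℝ) : ℝ := (1 + u * |t|) * rexp (-(u * |t|))

lemma continuous_maternCov (u : ℝ) : Continuous (maternCov u) := by
  unfold maternCov
  fun_prop

section

variable {u : ℝ}

lemma cexp_mul_maternCov (u w : ℝ) {t : ℝ} (ht : 0 ≤ t) :
    Complex.exp (↑(-2 * π * t * w) * Complex.I) * maternCov u t =
      t ^ 0 * Complex.exp (-⟨u, 2 * π * w⟩ * t) +
        u * (t ^ 1 * Complex.exp (-⟨u, 2 * π * w⟩ * t)) := by
  have hexp : -(⟨u, 2 * π * w⟩ : ℂ) * t = ↑(-2 * π * t * w) * Complex.I + ↑(-(u * t)) := by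
    apply Complex.ext
    · simp
    · simp only [neg_mul, Complex.neg_im, Complex.mul_im, Complex.add_im, Complex.ofReal_re,
        Complex.ofReal_im, Complex.I_re, Complex.I_im]
      ring
  rw [maternCov, abs_of_nonneg ht, hexp, Complex.exp_add]
  push_cast
  ring

lemma integrableOn_cexp_mul_maternCov_Ioi (hu : 0 < u) (w : ℝ) :
    IntegrableOn (fun t : ℝ => Complex.exp (↑(-2 * π * t * w) * Complex.I) * maternCov u t)
      (Ioi 0) :=
  ((integrableOn_pow_mul_cexp_Ioi hu 0).add
    ((integrableOn_pow_mul_cexp_Ioi hu 1).const_mul (u : ℂ))).congr_fun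
      (fun _ ht => (cexp_mul_maternCov u w (le_of_lt ht)).symm) measurableSet_Ioi

lemma integral_cexp_mul_maternCov_Ioi (hu : 0 < u) (w : ℝ) :
    ∫ t in Ioi (0 : ℝ), Complex.exp (↑(-2 * π * t * w) * Complex.I) * maternCov u t =
      1 / ⟨u, 2 * π * w⟩ + u / (⟨u, 2 * π * w⟩ : ℂ) ^ 2 := by
  rw [setIntegral_congr_fun measurableSet_Ioi fun t ht => cexp_mul_maternCov u w (le_of_lt ht),
    integral_add (integrableOn_pow_mul_cexp_Ioi hu 0)
      ((integrableOn_pow_mul_cexp_Ioi hu 1).const_mul (u : ℂ)),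
    integral_const_mul, integral_pow_mul_cexp_Ioi hu, integral_pow_mul_cexp_Ioi hu]
  simp [div_eq_mul_inv]

lemma cexp_mul_maternCov_neg (u w t : ℝ) :
    Complex.exp (↑(-2 * π * -t * w) * Complex.I) * maternCov u (-t) =
      Complex.exp (↑(-2 * π * t * -w) * Complex.I) * maternCov u t := by
  rw [maternCov, maternCov, abs_neg, mul_neg, mul_neg, neg_mul]

lemma integrable_ofReal_maternCov (hu : 0 < u) : Integrable fun t => (maternCov u t : ℂ) := by
  have hpos := integrableOn_cexp_mul_maternCov_Ioi hu 0
  simp only [mul_zero, Complex.ofReal_zero, zero_mul, Complex.exp_zero, one_mul] at hpos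
  exact integrable_of_integrableOn_Ioi hpos (by simpa only [maternCov, abs_neg] using hpos)

lemma fourier_maternCov (hu : 0 < u) (w : ℝ) :
    𝓕 (fun t => (maternCov u t : ℂ)) w =
      (4 * u * expSpectralDensity u (2 * π * w) ^ 2 : ℝ) := by
  have hneg := integrableOn_cexp_mul_maternCov_Ioi hu (-w)
  simp only [← cexp_mul_maternCov_neg] at hneg
  have hz : (⟨u, 2 * π * w⟩ : ℂ) = u + 2 * π * w * Complex.I := by apply Complex.ext <;> simp
  have hz' : (⟨u, 2 * π * -w⟩ : ℂ) = u - 2 * π * w * Complex.I := by apply Complex.ext <;> simp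
  have hmul : (u + 2 * π * w * Complex.I : ℂ) * (u - 2 * π * w * Complex.I) =
      u ^ 2 + (2 * π * w) ^ 2 := by
    linear_combination -(2 * π * w : ℂ) ^ 2 * Complex.I_sq
  have hmul₀ : (u ^ 2 + (2 * π * w) ^ 2 : ℂ) ≠ 0 := by
    exact_mod_cast (by positivity : u ^ 2 + (2 * π * w) ^ 2 ≠ 0)
  have hz₀ := left_ne_zero_of_mul (hmul ▸ hmul₀)
  have hz₀' := right_ne_zero_of_mul (hmul ▸ hmul₀)
  simp only [Real.fourier_real_eq_integral_exp_smul, smul_eq_mul]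
  rw [integral_eq_integral_Ioi_add (integrableOn_cexp_mul_maternCov_Ioi hu w) hneg]
  simp only [cexp_mul_maternCov_neg, integral_cexp_mul_maternCov_Ioi hu, hz, hz']
  rw [expSpectralDensity]
  push_cast
  rw [← hmul]
  field_simp
  ring

end

lemma re_fourierInv_ofReal {g : ℝ → ℝ} (hg : Integrable g) (v : ℝ) :
    (𝓕⁻ (fun x => (g x : ℂ)) v).re = ∫ x, g x * cos (2 * π * (x * v)) := by
  have hint : Integrable fun x => Complex.exp (↑(2 * π * (x * v)) * Complex.I) * (g x : ℂ) :=
    hg.ofReal.bdd_mul (c := 1) (by fun_prop)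
      (.of_forall fun x => (Complex.norm_exp_ofReal_mul_I _).le)
  have hre (x : ℝ) : (Complex.exp (↑(2 * π * (x * v)) * Complex.I) * (g x : ℂ)).re =
      g x * cos (2 * π * (x * v)) := by
    rw [Complex.re_mul_ofReal, Complex.exp_ofReal_mul_I_re, mul_comm]
  simp only [Real.fourierInv_eq', smul_eq_mul, RCLike.inner_apply, conj_trivial, mul_comm v,
    ← hre]
  exact (integral_re hint).symm

lemma integral_expSpectralDensity_sq_mul_cos {a : ℝ} (ha : 0 < a) (v : ℝ) :
    ∫ x, expSpectralDensity a x ^ 2 * cos (2 * π * (x * v)) =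
      π / (2 * a) * maternCov (2 * π * a) v := by
  have hu : 0 < 2 * π * a := by positivity
  have hfourier : 𝓕 (fun t => (maternCov (2 * π * a) t : ℂ)) =
      fun w => ((2 * a / π * expSpectralDensity a w ^ 2 : ℝ) : ℂ) := by
    ext w
    rw [fourier_maternCov hu, expSpectralDensity_mul_mul two_pi_pos.ne']
    congr 1
    field_simp
    ring
  have hint := (integrable_expSpectralDensity_sq ha).const_mul (2 * a / π)
  have hcont : Continuous fun t => (maternCov (2 * π * a) t : ℂ) :=
    Complex.continuous_ofReal.comp (continuous_maternCov _)
  have hinv := congr_fun (hcont.fourierInv_fourier_eq (integrable_ofReal_maternCov hu)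
    (hfourier ▸ hint.ofReal)) v
  have hre := congr_arg Complex.re hinv
  simp only [hfourier, re_fourierInv_ofReal hint, Complex.ofReal_re, mul_assoc (2 * a / π),
    integral_const_mul] at hre
  have hcancel : π / (2 * a) * (2 * a / π) = 1 := by field_simp
  rw [← hre, ← mul_assoc, hcancel, one_mul]

/-! ### The error as a Langevin function -/

/-- The Langevin function `coth u - 1 / u`. At `u = 0` both quotients are `0` in Lean, which is
also its continuous extension. -/
noncomputable def langevin (u : ℝ) : ℝ := cosh u / sinh u - 1 / u

section

variable {a : ℝ}

lemma sigmaSq_one_expSpectralDensity_eq_integral (ha : 0 < a) :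
    sigmaSq 1 (expSpectralDensity a) = ∫ x, (expSpectralDensity a x -
      (π * sinh (2 * π * a))⁻¹ * (cosh (2 * π * a) * expSpectralDensity a x ^ 2 -
        expSpectralDensity a x ^ 2 * cos (2 * π * (x * 1)))) := by
  have hu : 0 < 2 * π * a := by positivity
  have hsinh : 0 < sinh (2 * π * a) := sinh_pos_iff.2 hu
  have hden (x : ℝ) : 0 < cosh (2 * π * a) - cos (2 * π * x) :=
    sub_pos.2 ((cos_le_one _).trans_lt (one_lt_cosh.2 hu.ne'))
  have hsum (x : ℝ) : HasSum (fun k : ℤ => expSpectralDensity a (x + k / 1))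
      (π * (sinh (2 * π * a) / (cosh (2 * π * a) - cos (2 * π * x)))) := by
    simpa only [div_one, ← mul_assoc] using hasSum_expSpectralDensity_add_int ha x
  have hpos (x : ℝ) : 0 < π * (sinh (2 * π * a) / (cosh (2 * π * a) - cos (2 * π * x))) :=
    mul_pos pi_pos (div_pos hsinh (hden x))
  rw [sigmaSq_eq_integral_sub_sq_div (fun x => (hsum x).summable)
    fun x => (hsum x).tsum_eq ▸ (hpos x).ne']
  congr 1 with x
  have := (hden x).ne'
  rw [(hsum x).tsum_eq, mul_one]
  field_simp

lemma sigmaSq_one_expSpectralDensity (ha : 0 < a) :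
    sigmaSq 1 (expSpectralDensity a) = π * langevin (2 * π * a) := by
  have hsq := integrable_expSpectralDensity_sq ha
  have hcosh : Integrable fun x => cosh (2 * π * a) * expSpectralDensity a x ^ 2 :=
    hsq.const_mul _
  have hcos : Integrable fun x => expSpectralDensity a x ^ 2 * cos (2 * π * (x * 1)) :=
    hsq.mul_bdd (c := 1) (by fun_prop) (.of_forall fun x => abs_cos_le_one _)
  have hdiff : Integrable fun x => cosh (2 * π * a) * expSpectralDensity a x ^ 2 -
      expSpectralDensity a x ^ 2 * cos (2 * π * (x * 1)) := hcosh.sub hcos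
  have hvar : ∫ x, expSpectralDensity a x ^ 2 = π / (2 * a) := by
    simpa [maternCov] using integral_expSpectralDensity_sq_mul_cos ha 0
  rw [sigmaSq_one_expSpectralDensity_eq_integral ha,
    integral_sub (integrable_expSpectralDensity ha) (hdiff.const_mul _),
    integral_const_mul, integral_sub hcosh hcos, integral_const_mul,
    integral_expSpectralDensity ha, hvar, integral_expSpectralDensity_sq_mul_cos ha 1,
    maternCov, langevin, abs_one, mul_one, ← cosh_sub_sinh]
  field_simp
  ring

end

lemma sigmaSq_expSpectralDensity {θ h : ℝ} (hθ : 0 < θ) (hh : 0 < h) :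
    sigmaSq h (expSpectralDensity θ) = π * langevin (2 * π * (θ * h)) := by
  rw [sigmaSq_expSpectralDensity_eq_sigmaSq_one hh,
    sigmaSq_one_expSpectralDensity (mul_pos hθ hh)]

section

variable {u : ℝ}

lemma hasSum_langevin (hu : 0 < u) :
    HasSum (fun n : ℕ => 2 * u / (u ^ 2 + π ^ 2 * (n + 1) ^ 2)) (langevin u) := by
  have hsinh := (sinh_pos_iff.2 hu).ne'
  have hcosh : cosh (2 * u) - 1 = 2 * sinh u * sinh u := by
    rw [cosh_two_mul, cosh_sq]
    ring
  have hcoth : sinh (2 * u) / (cosh (2 * u) - 1) = cosh u / sinh u := by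
    rw [hcosh, sinh_two_mul, mul_div_mul_left _ _ (mul_ne_zero two_ne_zero hsinh)]
  have hℤ := hasSum_expSpectralDensity_add_int (div_pos hu pi_pos) 0
  simp only [zero_add, mul_zero, cos_zero, mul_div_cancel₀ u pi_ne_zero, hcoth] at hℤ
  have hℕ := ((hasSum_nat_add_iff' 1).2 hℤ.nat_add_neg).mul_left π⁻¹
  convert! hℕ using 1
  · ext n
    simp only [expSpectralDensity]
    push_cast
    field_simp
    ring
  · simp only [langevin, expSpectralDensity, Finset.sum_range_one]
    push_cast
    field_simp
    ring

lemma hasSum_two_mul_div_pi_sq_mul_succ_sq (u : ℝ) :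
    HasSum (fun n : ℕ => 2 * u / (π ^ 2 * (n + 1) ^ 2)) (u / 3) := by
  have hζ := ((hasSum_nat_add_iff' 1).2 hasSum_zeta_two).mul_left (2 * u / π ^ 2)
  convert! hζ using 1
  · ext n
    push_cast
    field_simp
  · simp only [Finset.sum_range_one, Nat.cast_zero]
    field_simp
    ring

lemma hasSum_two_mul_pow_three_div_pi_pow_four_mul_succ_pow_four (u : ℝ) :
    HasSum (fun n : ℕ => 2 * u ^ 3 / (π ^ 4 * (n + 1) ^ 4)) (u ^ 3 / 45) := by
  have hζ := ((hasSum_nat_add_iff' 1).2 hasSum_zeta_four).mul_left (2 * u ^ 3 / π ^ 4)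
  convert! hζ using 1
  · ext n
    push_cast
    field_simp
  · simp only [Finset.sum_range_one, Nat.cast_zero]
    field_simp
    ring

lemma langevin_le_div_three (hu : 0 < u) : langevin u ≤ u / 3 := by
  refine hasSum_le (fun n => ?_) (hasSum_langevin hu) (hasSum_two_mul_div_pi_sq_mul_succ_sq u)
  exact div_le_div_of_nonneg_left (by positivity) (by positivity)
    (le_add_of_nonneg_left (by positivity))

lemma div_three_sub_langevin_le (hu : 0 < u) : u / 3 - langevin u ≤ u ^ 3 / 45 := by
  refine hasSum_le (fun n => ?_) ((hasSum_two_mul_div_pi_sq_mul_succ_sq u).sub (hasSum_langevin hu))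
    (hasSum_two_mul_pow_three_div_pi_pow_four_mul_succ_pow_four u)
  set p : ℝ := π ^ 2 * (n + 1) ^ 2 with hp
  have hp₀ : 0 < p := by positivity
  calc 2 * u / p - 2 * u / (u ^ 2 + p) = 2 * u ^ 3 / (p * (u ^ 2 + p)) := by
        field_simp
        ring
    _ ≤ 2 * u ^ 3 / (p * p) :=
        div_le_div_of_nonneg_left (by positivity) (by positivity)
          (mul_le_mul_of_nonneg_left (le_add_of_nonneg_left (by positivity)) hp₀.le)
    _ = 2 * u ^ 3 / (π ^ 4 * (n + 1) ^ 4) := by rw [hp]; ring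

end

theorem exponential_error_asymptotics_general (θ h : ℝ) (hθ : 0 < θ) (hh : 0 < h) :
    |sigmaSq h (fun ω => θ / (θ ^ 2 + ω ^ 2)) - (2 * π ^ 2 / 3) * (θ * h)| ≤
      8 * π ^ 4 / 45 * (θ * h) ^ 3 := by
  set u := 2 * π * (θ * h) with hu
  have hu₀ : 0 < u := by positivity
  change |sigmaSq h (expSpectralDensity θ) - _| ≤ _
  have herror : sigmaSq h (expSpectralDensity θ) - (2 * π ^ 2 / 3) * (θ * h) =
      -(π * (u / 3 - langevin u)) := by
    rw [sigmaSq_expSpectralDensity hθ hh, hu]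
    ring
  have hnonneg : 0 ≤ u / 3 - langevin u := sub_nonneg.2 (langevin_le_div_three hu₀)
  rw [herror, abs_neg, abs_of_nonneg (mul_nonneg pi_nonneg hnonneg)]
  calc π * (u / 3 - langevin u) ≤ π * (u ^ 3 / 45) :=
        mul_le_mul_of_nonneg_left (div_three_sub_langevin_le hu₀) pi_nonneg
    _ = 8 * π ^ 4 / 45 * (θ * h) ^ 3 := by rw [hu]; ring

/-- Corollary 1: for the exponential spectral density `F_θ(ω) = θ/(θ² + ω²)` the
interpolation error satisfies `σ_h²(F_θ) = (2π²/3)θh + O((θh)²)` as `θh → 0`: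
there are constants `C > 0` and `ε > 0` such that for all `θ, h > 0` with
`θh < ε` one has `|σ_h²(F_θ) − (2π²/3)θh| ≤ C(θh)²`. -/
theorem exponential_error_asymptotics :
    ∃ C > (0 : ℝ), ∃ ε > (0 : ℝ), ∀ θ h : ℝ, 0 < θ → 0 < h → θ * h < ε →
      |sigmaSq h (fun ω => θ / (θ ^ 2 + ω ^ 2)) - (2 * π ^ 2 / 3) * (θ * h)|
        ≤ C * (θ * h) ^ 2 := by
  refine ⟨8 * π ^ 4 / 45, by positivity, 1, one_pos, fun θ h hθ hh hlt => ?_⟩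
  have hcube : (θ * h) ^ 3 ≤ (θ * h) ^ 2 :=
    pow_le_pow_of_le_one (by positivity) hlt.le (by norm_num)
  exact (exponential_error_asymptotics_general θ h hθ hh).trans
    (mul_le_mul_of_nonneg_left hcube (by positivity))
end
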